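/- arXiv:1812.08894 — 3 statements merged into one kernel-verified Lean document; each statement's English description precedes it below -/
import Mathlib

section
/- There exists a constant C > 0 depending only on n such that for every Radon measure μ on ℝⁿ with finite entropy λ(μ), one has C⁻¹ · sup_{x ∈ ℝⁿ, R > 0} μ(B_R(x))/R^{n−1} ≤ λ(μ) ≤ C · sup_{x ∈ ℝⁿ, R > 0} μ(B_R(x))/R^{n−1}, where B_R(x) is the Euclidean ball of radius R centered at x. -/
/-!
The weight in the entropy is a decreasing function of `|x - y|`, and at scale `s = r²` it is
`r^{-(n-1)}` times a fixed profile in `|x - y| / r`. On `B_r(y)` it is thus at least a constant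
times `r^{-(n-1)}`, which bounds area ratios by the entropy. Conversely, on the shell
`k r ≤ |x - y| < (k + 1) r` it is at most a constant times `r^{-(n-1)} exp(-k²/4)`, while the shell
has mass at most `((k + 1) r)^{n-1}` times the area ratio; the resulting series in `k` converges.
Only distances to a centre enter, so neither the ambient space nor the exponent matters.
-/

open MeasureTheory Metric Real ENNReal

/-- The (n-1)-dimensional Gaussian density `(4πs)^{-(n-1)/2} exp(-|x-y|²/(4s))` on `ℝⁿ`. -/
noncomputable def gaussianDensity (n : ℕ) (y : EuclideanSpace ℝ (Fin n)) (s : ℝ)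
    (x : EuclideanSpace ℝ (Fin n)) : ℝ :=
  (4 * Real.pi * s) ^ (-(((n : ℝ) - 1) / 2)) * Real.exp (-(dist x y) ^ 2 / (4 * s))

/-- The (mean curvature flow) entropy of a measure on `ℝⁿ`:
`λ(μ) = sup_{y ∈ ℝⁿ, s > 0} ∫ (4πs)^{-(n-1)/2} exp(-|x-y|²/(4s)) dμ(x)`. -/
noncomputable def entropy (n : ℕ) (μ : Measure (EuclideanSpace ℝ (Fin n))) : ℝ≥0∞ :=
  ⨆ (y : EuclideanSpace ℝ (Fin n)) (s : ℝ) (_ : 0 < s),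
    ∫⁻ x, ENNReal.ofReal (gaussianDensity n y s x) ∂μ

/-- `sup_{x ∈ ℝⁿ, R > 0} μ(B_R(x)) / R^{n-1}`, the optimal `(n-1)`-dimensional area growth
ratio of a measure on `ℝⁿ`. -/
noncomputable def areaRatio (n : ℕ) (μ : Measure (EuclideanSpace ℝ (Fin n))) : ℝ≥0∞ :=
  ⨆ (x : EuclideanSpace ℝ (Fin n)) (R : ℝ) (_ : 0 < R),
    μ (Metric.ball x R) / ENNReal.ofReal (R ^ ((n : ℝ) - 1))

/-- The radial profile `t ↦ (4πs)^{-d/2} exp(-t²/(4s))` of the `d`-dimensional Gaussian weight at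
scale `s`, for any real exponent `d`; `gaussianDensity n y s x` is its value at `t = |x - y|` for
`d = n - 1`. -/
noncomputable def gaussianProfile (d s t : ℝ) : ℝ :=
  (4 * π * s) ^ (-(d / 2)) * exp (-t ^ 2 / (4 * s))

lemma gaussianProfile_pos (d t : ℝ) {s : ℝ} (hs : 0 < s) : 0 < gaussianProfile d s t := by
  unfold gaussianProfile
  positivity

lemma antitoneOn_gaussianProfile (d : ℝ) {s : ℝ} (hs : 0 ≤ s) :
    AntitoneOn (gaussianProfile d s) (Set.Ici 0) := by
  intro t ht u _ htu
  have ht₀ : 0 ≤ t := ht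
  unfold gaussianProfile
  gcongr

lemma gaussianProfile_sq_mul (d a : ℝ) {r : ℝ} (hr : 0 < r) :
    gaussianProfile d (r ^ 2) (a * r) = gaussianProfile d 1 a / r ^ d := by
  have hscale : (r ^ 2) ^ (-(d / 2)) = (r ^ d)⁻¹ := by
    rw [← Real.rpow_natCast, ← rpow_mul hr.le, ← rpow_neg hr.le]
    congr 1
    push_cast
    ring
  have hexp : -(a * r) ^ 2 / (4 * r ^ 2) = -a ^ 2 / (4 * 1) := by
    field_simp
  rw [gaussianProfile, gaussianProfile, mul_rpow (by positivity) (by positivity), hscale, hexp,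
    mul_one (4 * π)]
  ring

lemma summable_gaussianProfile_mul_rpow (d : ℝ) :
    Summable fun k : ℕ => gaussianProfile d 1 k * ((k : ℝ) + 1) ^ d := by
  have hdecay : Summable fun k : ℕ => (k : ℝ) ^ d * exp (-(1 / 8) * (k : ℝ) ^ 2) := by
    have hgeom : Summable fun k : ℕ => exp (-(1 / 2) * (k : ℝ)) := by
      simpa only [mul_comm] using summable_exp_nat_mul_iff.mpr (by norm_num : -(1 / 2 : ℝ) < 0)
    exact summable_of_isBigO_nat hgeom
      ((rpow_mul_exp_neg_mul_sq_isLittleO_exp_neg (by norm_num) d).isBigO.comp_tendsto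
        tendsto_natCast_atTop_atTop)
  have hshift := ((summable_nat_add_iff 1).mpr hdecay).mul_left
    ((4 * π * 1) ^ (-(d / 2)) * exp (1 / 4))
  refine hshift.of_nonneg_of_le
    (fun k => mul_nonneg (gaussianProfile_pos d _ one_pos).le (by positivity)) fun k => ?_
  -- The rate drops from `1/4` to `1/8` because `(k + 1)² ≤ 2k² + 2`.
  have hexp : exp (-(k : ℝ) ^ 2 / (4 * 1)) ≤
      exp (1 / 4) * exp (-(1 / 8) * ((k : ℝ) + 1) ^ 2) := by
    rw [← exp_add]
    gcongr
    nlinarith [sq_nonneg ((k : ℝ) - 1)]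
  calc gaussianProfile d 1 k * ((k : ℝ) + 1) ^ d
      ≤ (4 * π * 1) ^ (-(d / 2)) * (exp (1 / 4) * exp (-(1 / 8) * ((k : ℝ) + 1) ^ 2)) *
          ((k : ℝ) + 1) ^ d := by
        unfold gaussianProfile
        gcongr
    _ = (4 * π * 1) ^ (-(d / 2)) * exp (1 / 4) *
          (((k + 1 : ℕ) : ℝ) ^ d * exp (-(1 / 8) * ((k + 1 : ℕ) : ℝ) ^ 2)) := by
        push_cast
        ring

section MetricMeasure

variable {X : Type*} [PseudoMetricSpace X] [MeasurableSpace X]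

/-- The `d`-dimensional Gaussian entropy of a measure on a metric space, for any real exponent
`d`: the supremum of its integrals against Gaussian weights over all centres and scales. For
`d = n - 1` on `ℝⁿ` it is `entropy n`. -/
noncomputable def gaussianEntropy (d : ℝ) (μ : Measure X) : ℝ≥0∞ :=
  ⨆ (y : X) (s : ℝ) (_ : 0 < s), ∫⁻ x, ENNReal.ofReal (gaussianProfile d s (dist x y)) ∂μ

/-- The `d`-dimensional growth ratio `sup_{x, R > 0} μ(B_R(x)) / R^d` of a measure on a metric
space, for any real exponent `d`. For `d = n - 1` on `ℝⁿ` it is `areaRatio n`. -/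
noncomputable def growthRatio (d : ℝ) (μ : Measure X) : ℝ≥0∞ :=
  ⨆ (x : X) (R : ℝ) (_ : 0 < R), μ (ball x R) / ENNReal.ofReal (R ^ d)

lemma lintegral_gaussianProfile_le_gaussianEntropy (d : ℝ) (μ : Measure X) (y : X) {s : ℝ}
    (hs : 0 < s) :
    ∫⁻ x, ENNReal.ofReal (gaussianProfile d s (dist x y)) ∂μ ≤ gaussianEntropy d μ :=
  le_iSup_of_le y (le_iSup₂_of_le s hs le_rfl)

lemma measure_ball_le_mul_growthRatio (d : ℝ) (μ : Measure X) (x : X) {R : ℝ} (hR : 0 < R) :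
    μ (ball x R) ≤ ENNReal.ofReal (R ^ d) * growthRatio d μ := by
  have hpos : ENNReal.ofReal (R ^ d) ≠ 0 := by
    simpa using rpow_pos_of_pos hR d
  rw [← ENNReal.div_le_iff' hpos ofReal_ne_top]
  exact le_iSup_of_le x (le_iSup₂_of_le R hR le_rfl)

variable [OpensMeasurableSpace X]

lemma mul_measure_ball_le_lintegral_comp_dist {f : ℝ → ℝ≥0∞} (hf : AntitoneOn f (Set.Ici 0))
    (μ : Measure X) (y : X) (R : ℝ) :
    f R * μ (ball y R) ≤ ∫⁻ x, f (dist x y) ∂μ := by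
  rw [← setLIntegral_const]
  refine (setLIntegral_mono' measurableSet_ball fun x hx => ?_).trans
    (setLIntegral_le_lintegral _ _)
  have hlt : dist x y < R := hx
  exact hf dist_nonneg (dist_nonneg.trans hlt.le) hlt.le

lemma lintegral_comp_dist_le_tsum_mul_measure_ball {f : ℝ → ℝ≥0∞}
    (hf : AntitoneOn f (Set.Ici 0)) (μ : Measure X) (y : X) {r : ℝ} (hr : 0 < r) :
    ∫⁻ x, f (dist x y) ∂μ ≤ ∑' k : ℕ, f (k * r) * μ (ball y ((k + 1) * r)) := by
  have hshell : ∀ x, f (dist x y) ≤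
      ∑' k : ℕ, (ball y ((k + 1) * r)).indicator (fun _ => f (k * r)) x := by
    intro x
    set k := ⌊dist x y / r⌋₊
    have hlower : k * r ≤ dist x y := (le_div_iff₀ hr).mp (Nat.floor_le (by positivity))
    have hupper : dist x y < (k + 1) * r := (div_lt_iff₀ hr).mp (Nat.lt_floor_add_one _)
    calc f (dist x y) ≤ f (k * r) := hf (Set.mem_Ici.mpr (by positivity)) dist_nonneg hlower
      _ = (ball y ((k + 1) * r)).indicator (fun _ => f (k * r)) x := by
        rw [Set.indicator_of_mem (mem_ball.mpr hupper)]
      _ ≤ _ := ENNReal.le_tsum k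
  calc ∫⁻ x, f (dist x y) ∂μ
      ≤ ∫⁻ x, ∑' k : ℕ, (ball y ((k + 1) * r)).indicator (fun _ => f (k * r)) x ∂μ :=
        lintegral_mono hshell
    _ = ∑' k : ℕ, ∫⁻ x, (ball y ((k + 1) * r)).indicator (fun _ => f (k * r)) x ∂μ :=
        lintegral_tsum fun k => (measurable_const.indicator measurableSet_ball).aemeasurable
    _ = ∑' k : ℕ, f (k * r) * μ (ball y ((k + 1) * r)) := by
        simp only [lintegral_indicator_const measurableSet_ball]

lemma mul_growthRatio_le_gaussianEntropy (d : ℝ) (μ : Measure X) :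
    ENNReal.ofReal (gaussianProfile d 1 1) * growthRatio d μ ≤ gaussianEntropy d μ := by
  simp only [growthRatio, ENNReal.mul_iSup]
  refine iSup_le fun x => iSup₂_le fun R hR => ?_
  have hanti := ofReal_mono.comp_antitoneOn (antitoneOn_gaussianProfile d (sq_nonneg R))
  have hprofile : gaussianProfile d (R ^ 2) R = gaussianProfile d 1 1 / R ^ d := by
    simpa only [one_mul] using gaussianProfile_sq_mul d 1 hR
  calc ENNReal.ofReal (gaussianProfile d 1 1) * (μ (ball x R) / ENNReal.ofReal (R ^ d))
      = ENNReal.ofReal (gaussianProfile d (R ^ 2) R) * μ (ball x R) := by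
        rw [hprofile, ofReal_div_of_pos (by positivity), ← mul_div_assoc,
          ENNReal.mul_div_right_comm]
    _ ≤ ∫⁻ z, ENNReal.ofReal (gaussianProfile d (R ^ 2) (dist z x)) ∂μ :=
        mul_measure_ball_le_lintegral_comp_dist hanti μ x R
    _ ≤ gaussianEntropy d μ := lintegral_gaussianProfile_le_gaussianEntropy d μ x (by positivity)

lemma gaussianEntropy_le_tsum_mul_growthRatio (d : ℝ) (μ : Measure X) :
    gaussianEntropy d μ ≤
      (∑' k : ℕ, ENNReal.ofReal (gaussianProfile d 1 k * ((k : ℝ) + 1) ^ d)) *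
        growthRatio d μ := by
  refine iSup_le fun y => iSup₂_le fun s hs => ?_
  obtain ⟨r, hr, rfl⟩ : ∃ r : ℝ, 0 < r ∧ r ^ 2 = s := ⟨√s, sqrt_pos.mpr hs, sq_sqrt hs.le⟩
  have hanti := ofReal_mono.comp_antitoneOn (antitoneOn_gaussianProfile d hs.le)
  have hscale (k : ℕ) : gaussianProfile d (r ^ 2) (k * r) * ((k + 1) * r) ^ d =
      gaussianProfile d 1 k * ((k : ℝ) + 1) ^ d := by
    rw [gaussianProfile_sq_mul d _ hr, mul_rpow (by positivity) hr.le]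
    field_simp
  rw [← ENNReal.tsum_mul_right]
  refine (lintegral_comp_dist_le_tsum_mul_measure_ball hanti μ y hr).trans
    (ENNReal.tsum_le_tsum fun k => ?_)
  calc ENNReal.ofReal (gaussianProfile d (r ^ 2) (k * r)) * μ (ball y ((k + 1) * r))
      ≤ ENNReal.ofReal (gaussianProfile d (r ^ 2) (k * r)) *
          (ENNReal.ofReal (((k + 1) * r) ^ d) * growthRatio d μ) := by
        gcongr
        exact measure_ball_le_mul_growthRatio d μ y (by positivity)
    _ = ENNReal.ofReal (gaussianProfile d 1 k * ((k : ℝ) + 1) ^ d) * growthRatio d μ := by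
        rw [← mul_assoc, ← ofReal_mul (gaussianProfile_pos d _ hs).le, hscale]

end MetricMeasure

theorem entropy_equiv_areaRatio_general (d : ℝ) :
    ∃ C : ℝ≥0∞, 0 < C ∧ C ≠ ⊤ ∧
      ∀ {X : Type*} [PseudoMetricSpace X] [MeasurableSpace X] [OpensMeasurableSpace X]
        (μ : Measure X),
          C⁻¹ * growthRatio d μ ≤ gaussianEntropy d μ ∧
            gaussianEntropy d μ ≤ C * growthRatio d μ := by
  set c := ENNReal.ofReal (gaussianProfile d 1 1)
  set S := ∑' k : ℕ, ENNReal.ofReal (gaussianProfile d 1 k * ((k : ℝ) + 1) ^ d)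
  have hc : c ≠ 0 := (ofReal_pos.mpr (gaussianProfile_pos d 1 one_pos)).ne'
  have hS : S ≠ ⊤ := (summable_gaussianProfile_mul_rpow d).tsum_ofReal_ne_top
  refine ⟨c⁻¹ ⊔ S, lt_sup_of_lt_left (ENNReal.inv_pos.mpr ofReal_ne_top),
    (max_lt (inv_lt_top.mpr hc.bot_lt) hS.lt_top).ne, fun μ => ⟨?_, ?_⟩⟩
  · calc (c⁻¹ ⊔ S)⁻¹ * growthRatio d μ ≤ c * growthRatio d μ := by
          gcongr
          exact ENNReal.inv_le_iff_inv_le.mpr le_sup_left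
      _ ≤ gaussianEntropy d μ := mul_growthRatio_le_gaussianEntropy d μ
  · calc gaussianEntropy d μ ≤ S * growthRatio d μ := gaussianEntropy_le_tsum_mul_growthRatio d μ
      _ ≤ (c⁻¹ ⊔ S) * growthRatio d μ := by
          gcongr
          exact le_sup_right

/-- There is a constant `C > 0` depending only on `n` such that for every Radon measure `μ`
on `ℝⁿ` with finite entropy,
`C⁻¹ sup_{x,R>0} μ(B_R(x))/R^{n-1} ≤ λ(μ) ≤ C sup_{x,R>0} μ(B_R(x))/R^{n-1}`. -/
theorem entropy_equiv_areaRatio (n : ℕ) (hn : 1 ≤ n) :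
    ∃ C : ℝ≥0∞, 0 < C ∧ C ≠ ⊤ ∧
      ∀ μ : Measure (EuclideanSpace ℝ (Fin n)), IsLocallyFiniteMeasure μ →
        entropy n μ ≠ ⊤ →
          C⁻¹ * areaRatio n μ ≤ entropy n μ ∧ entropy n μ ≤ C * areaRatio n μ := by
  obtain ⟨C, hpos, htop, hC⟩ := entropy_equiv_areaRatio_general ((n : ℝ) - 1)
  exact ⟨C, hpos, htop, fun μ _ _ => hC μ⟩
end

section
/- Fix n ≥ 1 and ε > 0, and let u : ℝⁿ × [0,∞) → ℝ be a smooth solution of ∂ₜu = Δu − (1/ε²) f(u) with f(u) = 2u(u²−1), |u| ≤ 1, such that for every T > 0 the function u and its spatial derivatives up to third order and its time derivative are uniformly bounded on ℝⁿ × [0,T]. Let μᵗ denote the measure on ℝⁿ with density x ↦ (ε/2)|∇u(x,t)|² + (1/ε)F(u(x,t)) with respect to Lebesgue measure, where F(u) = (1/2)(1−u²)². Let φ : ℝⁿ × [0,∞) → (0,∞) be smooth and suppose that for every T > 0 there exist C, a > 0 with φ + |∇φ| + |D²φ| + |∂ₜφ| + |∇φ|²/φ ≤ C exp(−a|x|²)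 on ℝⁿ × [0,T]. Then for every t > 0, d/dt ∫ φ(·,t) dμᵗ = −ε ∫ φ (Δu − ε^{−2} f(u) + ⟨∇u, ∇φ⟩/φ)² dx + ∫ (Δφ + ∂ₜφ) dμᵗ + ε ∫ (−⟨D²φ · ∇u, ∇u⟩ + ⟨∇u, ∇φ⟩²/φ) dx, where all spatial derivatives are evaluated at (x,t). -/
open Real MeasureTheory
open scoped RealInnerProductSpace

/-- The Laplacian of `f : ℝⁿ → ℝ` at `x`, as the sum of the second partial derivatives in
the coordinate directions. -/
noncomputable def spaceLaplacian (n : ℕ) (f : EuclideanSpace ℝ (Fin n) → ℝ)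
    (x : EuclideanSpace ℝ (Fin n)) : ℝ :=
  ∑ i : Fin n,
    fderiv ℝ (fun y => fderiv ℝ f y (EuclideanSpace.single i (1 : ℝ))) x
      (EuclideanSpace.single i (1 : ℝ))

/-! Differentiating `∫ φ e(u) dx` along the flow `∂ₜu = W`, with energy density
`e(u) = (ε/2)|∇u|² + F(u)/ε` and `W = Δu - f(u)/ε²`, produces `∂ₜφ e(u)` and `φ` times the variation
of `e` in the direction `W`; integration by parts turns the latter into
`-ε ∫ W (W φ + ⟪∇u, ∇φ⟫)`. The divergence of `e(u) ∇φ - ε ⟪∇u, ∇φ⟫ ∇u`, the stress-energy tensor of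
`u` applied to `∇φ`, integrates to zero, which trades `ε ∫ W ⟪∇u, ∇φ⟫` for
`∫ e(u) Δφ - ε ∫ D²φ(∇u, ∇u)`. Adding and subtracting this cross term and `⟪∇u, ∇φ⟫² / φ` completes
the square. Bounds on `u` in `C³` and integrability of the derivatives of `φ` make all boundary
terms vanish and allow differentiation under the integral sign. -/

namespace AllenCahn

open InnerProductSpace
open scoped Gradient Laplacian Topology

section FunctionClasses

variable {E G₁ G₂ G₃ : Type*} [NormedAddCommGroup E] [NormedSpace ℝ E]
  [NormedAddCommGroup G₁] [NormedSpace ℝ G₁] [NormedAddCommGroup G₂] [NormedSpace ℝ G₂]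
  [NormedAddCommGroup G₃] [NormedSpace ℝ G₃] {k j : ℕ} {C D : ℝ}

/-- The ball of radius `C` in the space `C_b^k` of functions with bounded derivatives up to order
`k`. Keeping the radius explicit lets estimates be uniform over families of functions. -/
structure CkBoundedBy (k : ℕ) (C : ℝ) (f : E → G₁) : Prop where
  contDiff : ContDiff ℝ k f
  bound : ∀ i ≤ k, ∀ x, ‖iteratedFDeriv ℝ i f x‖ ≤ C

namespace CkBoundedBy

lemma norm_le {f : E → G₁} (hf : CkBoundedBy k C f) (x : E) : ‖f x‖ ≤ C := by
  simpa using hf.bound 0 k.zero_le x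

lemma of_le {f : E → G₁} (hf : CkBoundedBy k C f) (hjk : j ≤ k) : CkBoundedBy j C f :=
  ⟨hf.contDiff.of_le (by exact_mod_cast hjk), fun i hi => hf.bound i (hi.trans hjk)⟩

lemma fderiv_right {f : E → G₁} (hf : CkBoundedBy (k + 1) C f) : CkBoundedBy k C (fderiv ℝ f) where
  contDiff := hf.contDiff.fderiv_right (by norm_cast)
  bound i hi x := norm_iteratedFDeriv_fderiv.trans_le (hf.bound (i + 1) (by lia) x)

lemma clm_comp {f : E → G₁} (hf : CkBoundedBy k C f) (L : G₁ →L[ℝ] G₂) :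
    CkBoundedBy k (‖L‖ * C) (L ∘ f) where
  contDiff := L.contDiff.comp hf.contDiff
  bound i hi x := (L.norm_iteratedFDeriv_comp_left hf.contDiff.contDiffAt
    (by exact_mod_cast hi)).trans (by gcongr; exact hf.bound i hi x)

lemma add {f g : E → G₁} (hf : CkBoundedBy k C f) (hg : CkBoundedBy k D g) :
    CkBoundedBy k (C + D) (f + g) where
  contDiff := hf.contDiff.add hg.contDiff
  bound i hi x := by
    have hik : (i : WithTop ℕ∞) ≤ k := by exact_mod_cast hi
    rw [iteratedFDeriv_add_apply (hf.contDiff.of_le hik).contDiffAt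
      (hg.contDiff.of_le hik).contDiffAt]
    exact norm_add_le_of_le (hf.bound i hi x) (hg.bound i hi x)

lemma sub {f g : E → G₁} (hf : CkBoundedBy k C f) (hg : CkBoundedBy k D g) :
    CkBoundedBy k (C + D) (f - g) where
  contDiff := hf.contDiff.sub hg.contDiff
  bound i hi x := by
    have hik : (i : WithTop ℕ∞) ≤ k := by exact_mod_cast hi
    rw [iteratedFDeriv_sub_apply (hf.contDiff.of_le hik).contDiffAt
      (hg.contDiff.of_le hik).contDiffAt]
    exact norm_sub_le_of_le (hf.bound i hi x) (hg.bound i hi x)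

lemma const_mul {f : E → ℝ} (hf : CkBoundedBy k C f) (c : ℝ) :
    CkBoundedBy k (‖ContinuousLinearMap.mul ℝ ℝ c‖ * C) (fun x => c * f x) :=
  hf.clm_comp (ContinuousLinearMap.mul ℝ ℝ c)

lemma bilin {f : E → G₁} {g : E → G₂} (hf : CkBoundedBy k C f) (hg : CkBoundedBy k D g)
    (B : G₁ →L[ℝ] G₂ →L[ℝ] G₃) :
    CkBoundedBy k (‖B‖ * (2 ^ k * (C * D))) (fun x => B (f x) (g x)) where
  contDiff := by have := hf.contDiff; have := hg.contDiff; fun_prop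
  bound i hi x := by
    have hC : 0 ≤ C := (norm_nonneg _).trans (hf.norm_le x)
    have hD : 0 ≤ D := (norm_nonneg _).trans (hg.norm_le x)
    refine (B.norm_iteratedFDeriv_le_of_bilinear hf.contDiff hg.contDiff x
      (by exact_mod_cast hi)).trans ?_
    gcongr
    calc ∑ l ∈ Finset.range (i + 1), (i.choose l : ℝ) * ‖iteratedFDeriv ℝ l f x‖ *
          ‖iteratedFDeriv ℝ (i - l) g x‖
        ≤ ∑ l ∈ Finset.range (i + 1), (i.choose l : ℝ) * C * D := by
          gcongr with l hl
          · exact hf.bound l (by grind) x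
          · exact hg.bound (i - l) (by lia) x
      _ = 2 ^ i * (C * D) := by
          simp_rw [mul_assoc, ← Finset.sum_mul]
          exact_mod_cast congrArg (fun m : ℕ => (m : ℝ) * (C * D)) (Nat.sum_range_choose i)
      _ ≤ 2 ^ k * (C * D) := by gcongr; norm_num

/-- The constant `max 1 C` turns the bound on the derivatives of `f` into the geometric one
required by the Faà di Bruno estimate. -/
lemma exists_comp [ProperSpace G₁] {h : G₁ → G₂} (hh : ContDiff ℝ k h) (C : ℝ) :
    ∃ D, ∀ f : E → G₁, CkBoundedBy k C f → CkBoundedBy k D (h ∘ f) := by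
  have hball (i : ℕ) (hi : i ≤ k) :
      ∃ K, ∀ y ∈ Metric.closedBall (0 : G₁) C, ‖iteratedFDeriv ℝ i h y‖ ≤ K :=
    (isCompact_closedBall 0 C).exists_bound_of_continuousOn
      (hh.continuous_iteratedFDeriv (by exact_mod_cast hi)).continuousOn
  choose! K hK using hball
  set M := ∑ i ∈ Finset.range (k + 1), |K i|
  have hM (i : ℕ) (hi : i ≤ k) (y : G₁) (hy : ‖y‖ ≤ C) : ‖iteratedFDeriv ℝ i h y‖ ≤ M :=
    (hK i hi y (by simpa using hy)).trans <| (le_abs_self _).trans <|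
      Finset.single_le_sum (f := fun i => |K i|) (fun _ _ => abs_nonneg _) (by grind)
  refine ⟨k.factorial * M * max 1 C ^ k, fun f hf => ⟨hh.comp hf.contDiff, fun i hi x => ?_⟩⟩
  have hcomp := norm_iteratedFDeriv_comp_le hh hf.contDiff (by exact_mod_cast hi) x
    (fun l hl => hM l (hl.trans hi) _ (hf.norm_le x))
    (fun l hl hli => (hf.bound l (hli.trans hi) x).trans <|
      (le_max_right 1 C).trans (le_self_pow₀ (le_max_left 1 C) (by lia)))
  refine hcomp.trans ?_
  gcongr
  exact le_max_left 1 C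

end CkBoundedBy

variable [MeasurableSpace E] {μ : Measure E}

/-- The class `C^k ∩ W^{k,1}` of `C^k` functions with integrable derivatives up to order `k`. -/
structure CkIntegrable (k : ℕ) (f : E → G₁) (μ : Measure E) : Prop where
  contDiff : ContDiff ℝ k f
  integrable_iteratedFDeriv : ∀ i ≤ k, Integrable (iteratedFDeriv ℝ i f) μ

lemma CkIntegrable.of_le {f : E → G₁} (hf : CkIntegrable k f μ) (hjk : j ≤ k) :
    CkIntegrable j f μ :=
  ⟨hf.contDiff.of_le (by exact_mod_cast hjk),
    fun i hi => hf.integrable_iteratedFDeriv i (hi.trans hjk)⟩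

variable [BorelSpace E] [FiniteDimensional ℝ E]

namespace CkIntegrable

lemma of_norm_iteratedFDeriv_le {f : E → G₁} {G : ℕ → E → ℝ} (hf : ContDiff ℝ k f)
    (hG : ∀ i ≤ k, Integrable (G i) μ) (hfG : ∀ i ≤ k, ∀ x, ‖iteratedFDeriv ℝ i f x‖ ≤ G i x) :
    CkIntegrable k f μ :=
  ⟨hf, fun i hi => (hG i hi).mono'
    (hf.continuous_iteratedFDeriv (by exact_mod_cast hi)).aestronglyMeasurable
    (ae_of_all _ (hfG i hi))⟩

lemma integrable {f : E → G₁} (hf : CkIntegrable k f μ) : Integrable f μ :=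
  (integrable_norm_iff hf.contDiff.continuous.aestronglyMeasurable).1 <| by
    simpa using (hf.integrable_iteratedFDeriv 0 k.zero_le).norm

lemma fderiv_right {f : E → G₁} (hf : CkIntegrable (k + 1) f μ) : CkIntegrable k (fderiv ℝ f) μ :=
  .of_norm_iteratedFDeriv_le (hf.contDiff.fderiv_right (by norm_cast))
    (fun i hi => (hf.integrable_iteratedFDeriv (i + 1) (by lia)).norm)
    (fun _ _ _ => norm_iteratedFDeriv_fderiv.le)

lemma clm_comp {f : E → G₁} (hf : CkIntegrable k f μ) (L : G₁ →L[ℝ] G₂) :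
    CkIntegrable k (L ∘ f) μ :=
  .of_norm_iteratedFDeriv_le (L.contDiff.comp hf.contDiff)
    (fun i hi => (hf.integrable_iteratedFDeriv i hi).norm.const_mul ‖L‖)
    (fun _ hi _ => L.norm_iteratedFDeriv_comp_left hf.contDiff.contDiffAt (by exact_mod_cast hi))

end CkIntegrable

lemma CkBoundedBy.bilin_ckIntegrable {f : E → G₁} {g : E → G₂} (hf : CkBoundedBy k C f)
    (hg : CkIntegrable k g μ) (B : G₁ →L[ℝ] G₂ →L[ℝ] G₃) :
    CkIntegrable k (fun x => B (f x) (g x)) μ := by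
  have hcont : ContDiff ℝ k (fun x => B (f x) (g x)) := by
    have := hf.contDiff; have := hg.contDiff; fun_prop
  refine .of_norm_iteratedFDeriv_le hcont
    (G := fun i x => ‖B‖ * ∑ l ∈ Finset.range (i + 1),
      (i.choose l : ℝ) * C * ‖iteratedFDeriv ℝ (i - l) g x‖)
    (fun i hi => (integrable_finsetSum _ fun l _ =>
      (hg.integrable_iteratedFDeriv (i - l) (by lia)).norm.const_mul _).const_mul _)
    fun i hi x => (B.norm_iteratedFDeriv_le_of_bilinear hf.contDiff hg.contDiff x
      (by exact_mod_cast hi)).trans ?_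
  gcongr with l hl
  exact hf.bound l (by grind) x

lemma CkBoundedBy.mul_ckIntegrable {f g : E → ℝ} (hf : CkBoundedBy k C f)
    (hg : CkIntegrable k g μ) : CkIntegrable k (fun x => f x * g x) μ :=
  hf.bilin_ckIntegrable hg (ContinuousLinearMap.mul ℝ ℝ)

end FunctionClasses

section VectorCalculus

variable {E : Type*} [NormedAddCommGroup E] [InnerProductSpace ℝ E] [FiniteDimensional ℝ E]
  {k : ℕ} {C : ℝ}

/-- The trace as a continuous linear functional on endomorphisms. -/
noncomputable def traceCLM (E : Type*) [NormedAddCommGroup E] [InnerProductSpace ℝ E]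
    [FiniteDimensional ℝ E] : (E →L[ℝ] E) →L[ℝ] ℝ :=
  LinearMap.toContinuousLinearMap (LinearMap.trace ℝ E ∘ₗ ContinuousLinearMap.coeLM ℝ)

/-- The divergence of a vector field, encoded as the trace of its derivative. -/
noncomputable def divergence (X : E → E) (x : E) : ℝ :=
  traceCLM E (fderiv ℝ X x)

lemma divergence_eq_sum {ι : Type*} [Fintype ι] (b : OrthonormalBasis ι ℝ E) (X : E → E) (x : E) :
    divergence X x = ∑ i, ⟪b i, fderiv ℝ X x (b i)⟫ :=
  LinearMap.trace_eq_sum_inner _ b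

lemma divergence_smul {f : E → ℝ} {X : E → E} {x : E} (hf : DifferentiableAt ℝ f x)
    (hX : DifferentiableAt ℝ X x) :
    divergence (fun y => f y • X y) x = f x * divergence X x + fderiv ℝ f x (X x) := by
  have htrace : traceCLM E ((fderiv ℝ f x).smulRight (X x)) = fderiv ℝ f x (X x) :=
    LinearMap.trace_smulRight _ _
  rw [divergence, fderiv_fun_smul hf hX, map_add, map_smul, htrace, smul_eq_mul, divergence]

/-- The Riesz isomorphism `E* ≃ E`, linear over `ℝ` instead of conjugate-linear. -/
noncomputable def rieszIso (E : Type*) [NormedAddCommGroup E] [InnerProductSpace ℝ E]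
    [FiniteDimensional ℝ E] : StrongDual ℝ E ≃ₗᵢ[ℝ] E :=
  (toDual ℝ E).symm

lemma gradient_eq_rieszIso_comp (v : E → ℝ) : ∇ v = rieszIso E ∘ fderiv ℝ v :=
  rfl

lemma contDiff_gradient {n m : WithTop ℕ∞} {v : E → ℝ} (hv : ContDiff ℝ n v) (hm : m + 1 ≤ n) :
    ContDiff ℝ m (∇ v) :=
  (rieszIso E).contDiff.comp (hv.fderiv_right hm)

lemma inner_fderiv_gradient (v : E → ℝ) (x a b : E) :
    ⟪fderiv ℝ (∇ v) x a, b⟫ = fderiv ℝ (fderiv ℝ v) x a b := by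
  rw [gradient_eq_rieszIso_comp, (rieszIso E).comp_fderiv]
  exact toDual_symm_apply

lemma fderiv_inner_gradient {v w : E → ℝ} {x : E} (hv : DifferentiableAt ℝ (∇ v) x)
    (hw : DifferentiableAt ℝ (∇ w) x) (y : E) :
    fderiv ℝ (fun z => ⟪∇ v z, ∇ w z⟫) x y =
      fderiv ℝ (fderiv ℝ v) x y (∇ w x) + fderiv ℝ (fderiv ℝ w) x y (∇ v x) := by
  rw [fderiv_inner_apply ℝ hv hw, real_inner_comm, inner_fderiv_gradient, inner_fderiv_gradient,
    add_comm]

lemma divergence_gradient (v : E → ℝ) : divergence (∇ v) = Δ v := by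
  ext x
  rw [divergence_eq_sum (stdOrthonormalBasis ℝ E),
    laplacian_eq_iteratedFDeriv_orthonormalBasis v (stdOrthonormalBasis ℝ E)]
  refine Finset.sum_congr rfl fun i _ => ?_
  rw [real_inner_comm, inner_fderiv_gradient, iteratedFDeriv_two_apply]
  rfl

lemma CkBoundedBy.gradient {v : E → ℝ} (hv : CkBoundedBy (k + 1) C v) : CkBoundedBy k C (∇ v) where
  contDiff := contDiff_gradient hv.contDiff (by norm_cast)
  bound i hi x := ((rieszIso E).norm_iteratedFDeriv_comp_left (fderiv ℝ v) x i).trans_le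
    (hv.fderiv_right.bound i hi x)

lemma CkBoundedBy.laplacian {v : E → ℝ} (hv : CkBoundedBy (k + 2) C v) :
    CkBoundedBy k (‖traceCLM E‖ * C) (Δ v) := by
  rw [← divergence_gradient]
  exact hv.gradient.fderiv_right.clm_comp (traceCLM E)

variable [MeasurableSpace E] [BorelSpace E] {μ : Measure E}

lemma CkIntegrable.gradient {v : E → ℝ} (hv : CkIntegrable (k + 1) v μ) :
    CkIntegrable k (∇ v) μ :=
  hv.fderiv_right.clm_comp ((rieszIso E).toContinuousLinearEquiv : StrongDual ℝ E →L[ℝ] E)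

lemma CkIntegrable.laplacian {v : E → ℝ} (hv : CkIntegrable (k + 2) v μ) :
    CkIntegrable k (Δ v) μ := by
  rw [← divergence_gradient]
  exact hv.gradient.fderiv_right.clm_comp (traceCLM E)

lemma CkBoundedBy.inner_gradient_ckIntegrable {v w : E → ℝ} (hv : CkBoundedBy (k + 1) C v)
    (hw : CkIntegrable (k + 1) w μ) : CkIntegrable k (fun x => ⟪∇ v x, ∇ w x⟫) μ :=
  hv.gradient.bilin_ckIntegrable hw.gradient (innerSL ℝ)

lemma CkBoundedBy.integrable_hessian_gradient {v w : E → ℝ} (hv : CkBoundedBy 1 C v)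
    (hw : CkIntegrable 2 w μ) :
    Integrable (fun x => fderiv ℝ (fderiv ℝ w) x (∇ v x) (∇ v x)) μ :=
  have hgrad : CkBoundedBy 0 C (∇ v) := hv.gradient
  (hgrad.bilin_ckIntegrable (hgrad.bilin_ckIntegrable hw.fderiv_right.fderiv_right
    (ContinuousLinearMap.apply ℝ (E →L[ℝ] ℝ))) (ContinuousLinearMap.apply ℝ ℝ)).integrable

lemma CkIntegrable.integrable_divergence {X : E → E} (hX : CkIntegrable 1 X μ) :
    Integrable (divergence X) μ :=
  ((hX.fderiv_right (k := 0)).clm_comp (traceCLM E)).integrable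

lemma integral_divergence_eq_zero [μ.IsAddHaarMeasure] {X : E → E} (hX : CkIntegrable 1 X μ) :
    ∫ x, divergence X x ∂μ = 0 := by
  set b := stdOrthonormalBasis ℝ E
  have hcomp (i) : CkIntegrable 1 (fun x => ⟪b i, X x⟫) μ := hX.clm_comp (innerSL ℝ (b i))
  have hderiv (i) (x) : ⟪b i, fderiv ℝ X x (b i)⟫ = fderiv ℝ (fun y => ⟪b i, X y⟫) x (b i) := by
    have := (innerSL ℝ (b i)).hasFDerivAt.comp x
      (hX.contDiff.differentiable (by norm_num) x).hasFDerivAt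
    exact (congrArg (· (b i)) this.fderiv).symm
  have hint (i) : Integrable (fun x => fderiv ℝ (fun y => ⟪b i, X y⟫) x (b i)) μ :=
    ((hcomp i).fderiv_right (k := 0)).integrable.apply_continuousLinearMap (b i)
  simp_rw [divergence_eq_sum b, hderiv]
  rw [integral_finsetSum _ fun i _ => hint i]
  refine Finset.sum_eq_zero fun i _ => ?_
  simpa using integral_mul_fderiv_eq_neg_fderiv_mul_of_integrable (μ := μ) (f := fun _ => (1 : ℝ))
    (v := b i) (by simp) (by simpa using hint i) (by simpa using (hcomp i).integrable)
    (fun _ _ => differentiableAt_const 1)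
    (fun x _ => (hcomp i).contDiff.differentiable (by norm_num) x)

end VectorCalculus

section Energy

variable {E : Type*} [NormedAddCommGroup E] [InnerProductSpace ℝ E] [FiniteDimensional ℝ E]
  {k : ℕ} {ε C D : ℝ} {F f : ℝ → ℝ} {v w ψ : E → ℝ} {x : E}

/-- The Allen–Cahn energy density `(ε/2)|∇v|² + F(v)/ε`, for an arbitrary potential `F`. -/
noncomputable def energyDensity (ε : ℝ) (F : ℝ → ℝ) (v : E → ℝ) (x : E) : ℝ :=
  ε / 2 * ‖∇ v x‖ ^ 2 + 1 / ε * F (v x)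

/-- The right-hand side `Δv - f(v)/ε²` of the Allen–Cahn equation, i.e. the velocity with which
the flow moves the profile `v`. -/
noncomputable def velocity (ε : ℝ) (f : ℝ → ℝ) (v : E → ℝ) (x : E) : ℝ :=
  Δ v x - 1 / ε ^ 2 * f (v x)

/-- The derivative of the energy density of `v` in the direction `w`, where `f` is the derivative
of the potential. -/
noncomputable def densityVariation (ε : ℝ) (f : ℝ → ℝ) (v w : E → ℝ) (x : E) : ℝ :=
  ε * ⟪∇ v x, ∇ w x⟫ + 1 / ε * (f (v x) * w x)

lemma energyDensity_nonneg (hε : 0 ≤ ε) (hF : ∀ r, 0 ≤ F r) (v : E → ℝ) (x : E) :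
    0 ≤ energyDensity ε F v x := by
  have := hF (v x)
  unfold energyDensity
  positivity

lemma CkBoundedBy.exists_energyDensity (E : Type*) [NormedAddCommGroup E] [InnerProductSpace ℝ E]
    [FiniteDimensional ℝ E] (hF : ContDiff ℝ k F) (ε C : ℝ) :
    ∃ D, ∀ v : E → ℝ, CkBoundedBy (k + 1) C v → CkBoundedBy k D (energyDensity ε F v) := by
  obtain ⟨D, hD⟩ := CkBoundedBy.exists_comp (E := E) hF C
  have hinner (v : E → ℝ) :
      energyDensity ε F v = fun x => ε / 2 * ⟪∇ v x, ∇ v x⟫ + 1 / ε * F (v x) := by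
    ext x
    rw [energyDensity, real_inner_self_eq_norm_sq]
  simp_rw [hinner]
  exact ⟨_, fun v hv => ((hv.gradient.bilin hv.gradient (innerSL ℝ)).const_mul (ε / 2)).add
    ((hD v (hv.of_le k.le_succ)).const_mul (1 / ε))⟩

lemma CkBoundedBy.exists_velocity (E : Type*) [NormedAddCommGroup E] [InnerProductSpace ℝ E]
    [FiniteDimensional ℝ E] (hf : ContDiff ℝ k f) (ε C : ℝ) :
    ∃ D, ∀ v : E → ℝ, CkBoundedBy (k + 2) C v → CkBoundedBy k D (velocity ε f v) := by
  obtain ⟨D, hD⟩ := CkBoundedBy.exists_comp (E := E) hf C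
  exact ⟨_, fun v hv => hv.laplacian.sub ((hD v (hv.of_le (by lia))).const_mul (1 / ε ^ 2))⟩

lemma CkBoundedBy.exists_densityVariation (E : Type*) [NormedAddCommGroup E]
    [InnerProductSpace ℝ E] [FiniteDimensional ℝ E] (hf : ContDiff ℝ k f) (ε C D : ℝ) :
    ∃ K, ∀ v w : E → ℝ, CkBoundedBy (k + 1) C v → CkBoundedBy (k + 1) D w →
      CkBoundedBy k K (densityVariation ε f v w) := by
  obtain ⟨K, hK⟩ := CkBoundedBy.exists_comp (E := E) hf C
  exact ⟨_, fun v w hv hw =>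
    ((hv.gradient.bilin hw.gradient (innerSL ℝ)).const_mul ε).add
      (((hK v (hv.of_le k.le_succ)).bilin (hw.of_le k.le_succ)
        (ContinuousLinearMap.mul ℝ ℝ)).const_mul (1 / ε))⟩

lemma fderiv_energyDensity (hF : HasDerivAt F (f (v x)) (v x)) (hv : DifferentiableAt ℝ v x)
    (hgrad : DifferentiableAt ℝ (∇ v) x) (y : E) :
    fderiv ℝ (energyDensity ε F v) x y =
      ε * fderiv ℝ (fderiv ℝ v) x y (∇ v x) + 1 / ε * (f (v x) * fderiv ℝ v x y) := by
  have henergy : HasFDerivAt (energyDensity ε F v) _ x :=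
    (hgrad.hasFDerivAt.norm_sq.const_mul (ε / 2)).add
      ((hF.comp_hasFDerivAt x hv.hasFDerivAt).const_mul (1 / ε))
  simp only [henergy.fderiv, add_apply, smul_apply, smul_eq_mul, ContinuousLinearMap.comp_apply,
    innerSL_apply_apply, ← inner_fderiv_gradient, real_inner_comm (∇ v x)]
  ring

lemma mul_densityVariation (hε : ε ≠ 0) (hψ : DifferentiableAt ℝ ψ x)
    (hw : DifferentiableAt ℝ w x) (hgrad : DifferentiableAt ℝ (∇ v) x) :
    ψ x * densityVariation ε f v w x =
      ε * divergence (fun y => (w y * ψ y) • ∇ v y) x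
        - ε * (w x * (velocity ε f v x * ψ x + ⟪∇ v x, ∇ ψ x⟫)) := by
  rw [divergence_smul (hw.fun_mul hψ) hgrad, divergence_gradient, fderiv_fun_mul hw hψ,
    densityVariation, velocity, real_inner_comm, real_inner_comm (∇ ψ x)]
  simp only [inner_gradient_left, add_apply, smul_apply, smul_eq_mul]
  field_simp
  ring

/-- This is the divergence of the stress-energy tensor `e Id - ε ∇v ⊗ ∇v` applied to `∇ψ`; the
Hessian of `v` cancels by its symmetry. -/
lemma divergence_stress (hε : ε ≠ 0) (hF : HasDerivAt F (f (v x)) (v x)) (hv : ContDiff ℝ 2 v)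
    (hψ : ContDiff ℝ 2 ψ) :
    divergence (fun y => energyDensity ε F v y • ∇ ψ y) x
        - ε * divergence (fun y => ⟪∇ v y, ∇ ψ y⟫ • ∇ v y) x =
      energyDensity ε F v x * Δ ψ x - ε * (velocity ε f v x * ⟪∇ v x, ∇ ψ x⟫)
        - ε * fderiv ℝ (fderiv ℝ ψ) x (∇ v x) (∇ v x) := by
  have hgradv : DifferentiableAt ℝ (∇ v) x :=
    (contDiff_gradient (m := 1) hv (by norm_num)).differentiable (by norm_num) x
  have hgradψ : DifferentiableAt ℝ (∇ ψ) x :=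
    (contDiff_gradient (m := 1) hψ (by norm_num)).differentiable (by norm_num) x
  have henergy : DifferentiableAt ℝ (energyDensity ε F v) x :=
    (hgradv.norm_sq ℝ |>.const_mul (ε / 2)).add
      ((hF.differentiableAt.comp x (hv.differentiable (by norm_num) x)).const_mul (1 / ε))
  have hinner := hgradv.inner ℝ hgradψ
  have hsymm : fderiv ℝ (fderiv ℝ v) x (∇ ψ x) (∇ v x) =
      fderiv ℝ (fderiv ℝ v) x (∇ v x) (∇ ψ x) :=
    hv.contDiffAt.isSymmSndFDerivAt (by simp) _ _
  have hdv : fderiv ℝ v x (∇ ψ x) = ⟪∇ v x, ∇ ψ x⟫ := (inner_gradient_left ..).symm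
  rw [divergence_smul henergy hgradψ, divergence_smul hinner hgradv,
    fderiv_inner_gradient hgradv hgradψ,
    fderiv_energyDensity hF (hv.differentiable (by norm_num) x) hgradv,
    divergence_gradient, divergence_gradient, hsymm, hdv, velocity]
  field_simp
  ring

end Energy

section FixedTime

variable {E : Type*} [NormedAddCommGroup E] [InnerProductSpace ℝ E] [FiniteDimensional ℝ E]
  [MeasurableSpace E] [BorelSpace E] {μ : Measure E} [μ.IsAddHaarMeasure]
  {ε C D : ℝ} {F f : ℝ → ℝ} {v w ψ : E → ℝ}

lemma contDiff_one_of_hasDerivAt (hF : ∀ r, HasDerivAt F (f r) r) (hf : Continuous f) :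
    ContDiff ℝ 1 F :=
  contDiff_one_iff_deriv.2 ⟨fun r => (hF r).differentiableAt, by rwa [deriv_eq hF]⟩

lemma integral_mul_densityVariation (hε : ε ≠ 0) (hf : Continuous f) (hv : CkBoundedBy 2 C v)
    (hw : CkBoundedBy 1 D w) (hψ : CkIntegrable 1 ψ μ) :
    ∫ x, ψ x * densityVariation ε f v w x ∂μ =
      -ε * ∫ x, w x * (velocity ε f v x * ψ x + ⟪∇ v x, ∇ ψ x⟫) ∂μ := by
  obtain ⟨K, hK⟩ := CkBoundedBy.exists_velocity E (k := 0) (contDiff_zero.2 hf) ε C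
  have hX : CkIntegrable 1 (fun x => (w x * ψ x) • ∇ v x) μ :=
    hv.gradient.bilin_ckIntegrable (hw.mul_ckIntegrable hψ) (ContinuousLinearMap.lsmul ℝ ℝ).flip
  have hinner : CkIntegrable 0 (fun x => ⟪∇ v x, ∇ ψ x⟫) μ :=
    (hv.of_le one_le_two).inner_gradient_ckIntegrable hψ
  have hint : Integrable (fun x => w x * (velocity ε f v x * ψ x + ⟪∇ v x, ∇ ψ x⟫)) μ := by
    have hw0 := hw.of_le zero_le_one
    have hWψ := (hK v hv).mul_ckIntegrable (hψ.of_le zero_le_one)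
    simp_rw [mul_add]
    exact (hw0.mul_ckIntegrable hWψ).integrable.add (hw0.mul_ckIntegrable hinner).integrable
  have hpoint (x : E) := mul_densityVariation (f := f) hε
    (hψ.contDiff.differentiable (by norm_num) x) (hw.contDiff.differentiable (by norm_num) x)
    ((contDiff_gradient (m := 1) hv.contDiff (by norm_num)).differentiable (by norm_num) x)
  simp_rw [hpoint]
  rw [integral_sub (hX.integrable_divergence.const_mul ε) (hint.const_mul ε), integral_const_mul,
    integral_const_mul, integral_divergence_eq_zero hX]
  ring

lemma integral_velocity_mul_inner (hε : ε ≠ 0) (hF : ∀ r, HasDerivAt F (f r) r)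
    (hf : Continuous f) (hv : CkBoundedBy 2 C v) (hψ : CkIntegrable 2 ψ μ) :
    ε * ∫ x, velocity ε f v x * ⟪∇ v x, ∇ ψ x⟫ ∂μ =
      (∫ x, energyDensity ε F v x * Δ ψ x ∂μ)
        - ε * ∫ x, fderiv ℝ (fderiv ℝ ψ) x (∇ v x) (∇ v x) ∂μ := by
  obtain ⟨K, hK⟩ := CkBoundedBy.exists_velocity E (k := 0) (contDiff_zero.2 hf) ε C
  obtain ⟨L, hL⟩ :=
    CkBoundedBy.exists_energyDensity E (k := 1) (contDiff_one_of_hasDerivAt hF hf) ε C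
  have hinner : CkIntegrable 1 (fun x => ⟪∇ v x, ∇ ψ x⟫) μ := hv.inner_gradient_ckIntegrable hψ
  have hX : CkIntegrable 1 (fun x => energyDensity ε F v x • ∇ ψ x) μ :=
    (hL v hv).bilin_ckIntegrable hψ.gradient (ContinuousLinearMap.lsmul ℝ ℝ)
  have hY : CkIntegrable 1 (fun x => ⟪∇ v x, ∇ ψ x⟫ • ∇ v x) μ :=
    hv.gradient.bilin_ckIntegrable hinner (ContinuousLinearMap.lsmul ℝ ℝ).flip
  have hlap : Integrable (fun x => energyDensity ε F v x * Δ ψ x) μ :=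
    (((hL v hv).of_le zero_le_one).mul_ckIntegrable hψ.laplacian).integrable
  have hWg : Integrable (fun x => velocity ε f v x * ⟪∇ v x, ∇ ψ x⟫) μ :=
    ((hK v hv).mul_ckIntegrable (hinner.of_le zero_le_one)).integrable
  have hhess := (hv.of_le one_le_two).integrable_hessian_gradient hψ
  have hstress := integral_congr_ae (μ := μ) <| ae_of_all μ fun x =>
    divergence_stress hε (hF (v x)) hv.contDiff hψ.contDiff
  rw [integral_sub hX.integrable_divergence (hY.integrable_divergence.const_mul ε),
    integral_sub (hlap.sub' (hWg.const_mul ε)) (hhess.const_mul ε),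
    integral_sub hlap (hWg.const_mul ε), integral_const_mul, integral_const_mul,
    integral_const_mul, integral_divergence_eq_zero hX, integral_divergence_eq_zero hY] at hstress
  linarith

/-- Combines the first variation along the flow with the stress-energy identity: the two cross
terms `W⟪∇v, ∇ψ⟫` add up to the one needed to complete the square. -/
lemma integral_mul_densityVariation_velocity (hε : ε ≠ 0) (hF : ∀ r, HasDerivAt F (f r) r)
    (hf : ContDiff ℝ 1 f) (hv : CkBoundedBy 3 C v) (hψ : CkIntegrable 2 ψ μ) (hψ0 : ∀ x, ψ x ≠ 0)
    (hquot : Integrable (fun x => ⟪∇ v x, ∇ ψ x⟫ ^ 2 / ψ x) μ) :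
    ∫ x, ψ x * densityVariation ε f v (velocity ε f v) x ∂μ =
      -ε * (∫ x, ψ x * (velocity ε f v x + ⟪∇ v x, ∇ ψ x⟫ / ψ x) ^ 2 ∂μ)
        + (∫ x, energyDensity ε F v x * Δ ψ x ∂μ)
        + ε * ∫ x, (-fderiv ℝ (fderiv ℝ ψ) x (∇ v x) (∇ v x) + ⟪∇ v x, ∇ ψ x⟫ ^ 2 / ψ x) ∂μ := by
  obtain ⟨K, hK⟩ := CkBoundedBy.exists_velocity E (k := 1) hf ε C
  have hW0 := (hK v hv).of_le zero_le_one
  have hinner : CkIntegrable 1 (fun x => ⟪∇ v x, ∇ ψ x⟫) μ :=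
    (hv.of_le (by norm_num)).inner_gradient_ckIntegrable hψ
  have hWg : Integrable (fun x => velocity ε f v x * ⟪∇ v x, ∇ ψ x⟫) μ :=
    (hW0.mul_ckIntegrable (hinner.of_le zero_le_one)).integrable
  have hWWψ : Integrable (fun x => velocity ε f v x * (velocity ε f v x * ψ x)) μ :=
    (hW0.mul_ckIntegrable (hW0.mul_ckIntegrable (hψ.of_le zero_le_two))).integrable
  have hhess := (hv.of_le (by norm_num)).integrable_hessian_gradient hψ
  have hsquare (x : E) : ψ x * (velocity ε f v x + ⟪∇ v x, ∇ ψ x⟫ / ψ x) ^ 2 =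
      velocity ε f v x * (velocity ε f v x * ψ x + ⟪∇ v x, ∇ ψ x⟫)
        + velocity ε f v x * ⟪∇ v x, ∇ ψ x⟫ + ⟪∇ v x, ∇ ψ x⟫ ^ 2 / ψ x := by
    field_simp [hψ0 x]
    ring
  have hdiss : Integrable (fun x => velocity ε f v x *
      (velocity ε f v x * ψ x + ⟪∇ v x, ∇ ψ x⟫)) μ := by
    simpa only [mul_add] using hWWψ.fun_add hWg
  have hstress := integral_velocity_mul_inner hε hF hf.continuous (hv.of_le (by norm_num)) hψ
  rw [integral_mul_densityVariation hε hf.continuous (hv.of_le (by norm_num)) (hK v hv)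
    (hψ.of_le one_le_two)]
  simp_rw [hsquare]
  rw [integral_add (hdiss.fun_add hWg) hquot, integral_add hdiss hWg,
    integral_add hhess.fun_neg hquot, integral_neg]
  linarith

end FixedTime

section TimeDerivative

variable {E : Type*} [NormedAddCommGroup E]

lemma contDiff_spaceSlice [NormedSpace ℝ E] {u : E → ℝ → ℝ} {m : WithTop ℕ∞}
    (hu : ContDiff ℝ m (fun p : E × ℝ => u p.1 p.2)) (t : ℝ) : ContDiff ℝ m (fun y => u y t) :=
  hu.comp (contDiff_id.prodMk contDiff_const)

lemma hasDerivAt_timeSlice [NormedSpace ℝ E] {u : E → ℝ → ℝ}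
    (hu : ContDiff ℝ 1 (fun p : E × ℝ => u p.1 p.2)) (x : E) (t : ℝ) :
    HasDerivAt (u x) (deriv (u x) t) t :=
  ((hu.comp (contDiff_const.prodMk contDiff_id)).differentiable (by norm_num) t).hasDerivAt

lemma hasDerivAt_fderiv_of_contDiff_two [NormedSpace ℝ E] {G : Type*} [NormedAddCommGroup G]
    [NormedSpace ℝ G] {u : E → ℝ → G} (hu : ContDiff ℝ 2 (fun p : E × ℝ => u p.1 p.2))
    (x : E) (t : ℝ) :
    HasDerivAt (fun τ => fderiv ℝ (fun y => u y τ) x) (fderiv ℝ (fun y => deriv (u y) t) x) t := by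
  set U : E × ℝ → G := fun p => u p.1 p.2
  have hU (p : E × ℝ) : HasFDerivAt U (fderiv ℝ U p) p :=
    (hu.differentiable (by norm_num) p).hasFDerivAt
  have hspace (τ : ℝ) : fderiv ℝ (fun y => u y τ) x = (fderiv ℝ U (x, τ)).comp (.inl ℝ E ℝ) :=
    ((hU (x, τ)).comp (f := fun y => (y, τ)) x (hasFDerivAt_prodMk_left x τ)).fderiv
  have hline (y : E) : HasDerivAt (fun τ : ℝ => (y, τ)) (0, 1) t :=
    (hasDerivAt_const t y).prodMk (hasDerivAt_id t)
  have htime (y : E) : deriv (u y) t = fderiv ℝ U (y, t) (0, 1) :=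
    ((hU (y, t)).comp_hasDerivAt t (hline y)).deriv
  have hD : HasFDerivAt (fderiv ℝ U) (fderiv ℝ (fderiv ℝ U) (x, t)) (x, t) :=
    ((hu.fderiv_right (m := 1) (by norm_num)).differentiable (by norm_num) _).hasFDerivAt
  have hsymm := hu.contDiffAt.isSymmSndFDerivAt (x := (x, t)) (by simp)
  have hmixed : fderiv ℝ (fun y => deriv (u y) t) x =
      (fderiv ℝ (fderiv ℝ U) (x, t) (0, 1)).comp (.inl ℝ E ℝ) := by
    simp_rw [htime]
    ext y
    rw [((hD.comp x (hasFDerivAt_prodMk_left x t)).clm_apply (hasFDerivAt_const (0, 1) x)).fderiv]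
    simpa using hsymm (y, 0) (0, 1)
  simp_rw [hspace, hmixed]
  exact ((hD.comp_hasDerivAt t (hline x)).clm_comp (hasDerivAt_const t _)).congr_deriv (by simp)

lemma continuous_deriv_apply [NormedSpace ℝ E] {φ : E → ℝ → ℝ}
    (hφ : ContDiff ℝ 1 (fun p : E × ℝ => φ p.1 p.2)) (t : ℝ) :
    Continuous (fun x => deriv (φ x) t) :=
  (ContDiff.fderiv_apply (m := 1) (n := 0) (f := φ) (g := fun _ => t) (k := fun _ => (1 : ℝ)) hφ
    contDiff_const contDiff_const (by norm_num)).continuous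

variable [InnerProductSpace ℝ E] [FiniteDimensional ℝ E] {ε t : ℝ} {F f : ℝ → ℝ} {u : E → ℝ → ℝ}

lemma hasDerivAt_gradient (hu : ContDiff ℝ 2 (fun p : E × ℝ => u p.1 p.2)) (x : E) (t : ℝ) :
    HasDerivAt (fun τ => ∇ (fun y => u y τ) x) (∇ (fun y => deriv (u y) t) x) t :=
  (rieszIso E).toContinuousLinearEquiv.hasFDerivAt.comp_hasDerivAt t
    (hasDerivAt_fderiv_of_contDiff_two hu x t)

lemma hasDerivAt_energyDensity {x : E} (hF : HasDerivAt F (f (u x t)) (u x t))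
    (hu : ContDiff ℝ 2 (fun p : E × ℝ => u p.1 p.2)) :
    HasDerivAt (fun τ => energyDensity ε F (fun y => u y τ) x)
      (densityVariation ε f (fun y => u y t) (fun y => deriv (u y) t) x) t := by
  have htime := hasDerivAt_timeSlice (hu.of_le one_le_two) x t
  refine (((hasDerivAt_gradient hu x t).norm_sq.const_mul (ε / 2)).add
    ((hF.comp t htime).const_mul (1 / ε))).congr_deriv ?_
  rw [densityVariation]
  ring

lemma hasDerivAt_integral_mul_of_dominated {α : Type*} [MeasurableSpace α] {μ : Measure α}
    {e e' φ φ' : ℝ → α → ℝ} {G : α → ℝ} {K K' t : ℝ} {s : Set ℝ} (hs : s ∈ 𝓝 t)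
    (hG : Integrable G μ)
    (he_meas : ∀ τ ∈ s, AEStronglyMeasurable (e τ) μ) (he'_meas : AEStronglyMeasurable (e' t) μ)
    (hφ_meas : ∀ τ ∈ s, AEStronglyMeasurable (φ τ) μ) (hφ'_meas : AEStronglyMeasurable (φ' t) μ)
    (he_le : ∀ τ ∈ s, ∀ x, ‖e τ x‖ ≤ K) (he'_le : ∀ τ ∈ s, ∀ x, ‖e' τ x‖ ≤ K')
    (hφ_le : ∀ τ ∈ s, ∀ x, ‖φ τ x‖ ≤ G x) (hφ'_le : ∀ τ ∈ s, ∀ x, ‖φ' τ x‖ ≤ G x)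
    (he : ∀ τ ∈ s, ∀ x, HasDerivAt (fun σ => e σ x) (e' τ x) τ)
    (hφ : ∀ τ ∈ s, ∀ x, HasDerivAt (fun σ => φ σ x) (φ' τ x) τ) :
    HasDerivAt (fun τ => ∫ x, e τ x * φ τ x ∂μ)
      ((∫ x, e' t x * φ t x ∂μ) + ∫ x, e t x * φ' t x ∂μ) t := by
  have ht : t ∈ s := mem_of_mem_nhds hs
  have hle (τ) (hτ : τ ∈ s) (x) : ‖e τ x * φ τ x‖ ≤ K * G x :=
    norm_mul_le_of_le (he_le τ hτ x) (hφ_le τ hτ x)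
  have hle₁ (τ) (hτ : τ ∈ s) (x) : ‖e' τ x * φ τ x‖ ≤ K' * G x :=
    norm_mul_le_of_le (he'_le τ hτ x) (hφ_le τ hτ x)
  have hle₂ (τ) (hτ : τ ∈ s) (x) : ‖e τ x * φ' τ x‖ ≤ K * G x :=
    norm_mul_le_of_le (he_le τ hτ x) (hφ'_le τ hτ x)
  have hKG := hG.const_mul K
  have hKG' := hG.const_mul K'
  have hint₁ := hKG'.mono' (he'_meas.fun_mul (hφ_meas t ht)) (ae_of_all _ (hle₁ t ht))
  have hint₂ := hKG.mono' ((he_meas t ht).fun_mul hφ'_meas) (ae_of_all _ (hle₂ t ht))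
  rw [← integral_add hint₁ hint₂]
  exact (hasDerivAt_integral_of_dominated_loc_of_deriv_le (μ := μ)
    (F' := fun τ x => e' τ x * φ τ x + e τ x * φ' τ x) hs
    (Filter.eventually_of_mem hs fun τ hτ => (he_meas τ hτ).mul (hφ_meas τ hτ))
    (hKG.mono' ((he_meas t ht).mul (hφ_meas t ht)) (ae_of_all _ (hle t ht)))
    (hint₁.aestronglyMeasurable.add hint₂.aestronglyMeasurable)
    (ae_of_all _ fun x τ hτ => norm_add_le_of_le (hle₁ τ hτ x) (hle₂ τ hτ x)) (hKG'.add hKG)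
    (ae_of_all _ fun x τ hτ => (he τ hτ x).mul (hφ τ hτ x))).2

end TimeDerivative

section EnergyMeasure

variable {E : Type*} [NormedAddCommGroup E] [InnerProductSpace ℝ E] [FiniteDimensional ℝ E]
  [MeasurableSpace E] {μ : Measure E} {ε C : ℝ} {F f : ℝ → ℝ} {v ψ : E → ℝ}

/-- The Allen–Cahn energy of `v` as a measure: `μᵗ` of the paper when `v = u(·, t)` and `μ` is the
Lebesgue measure. -/
noncomputable def energyMeasure (ε : ℝ) (F : ℝ → ℝ) (μ : Measure E) (v : E → ℝ) : Measure E :=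
  μ.withDensity fun x => ENNReal.ofReal (energyDensity ε F v x)

lemma integral_energyMeasure (hε : 0 ≤ ε) (hF : ∀ r, 0 ≤ F r)
    (hv : Measurable (energyDensity ε F v)) (p : E → ℝ) :
    ∫ x, p x ∂(energyMeasure ε F μ v) = ∫ x, energyDensity ε F v x * p x ∂μ := by
  rw [energyMeasure, integral_withDensity_eq_integral_toReal_smul hv.ennreal_ofReal
    (ae_of_all _ fun _ => ENNReal.ofReal_lt_top)]
  simp_rw [ENNReal.toReal_ofReal (energyDensity_nonneg hε hF v _), smul_eq_mul]

variable [BorelSpace E]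

lemma integrable_inner_gradient_sq_div (hv : CkBoundedBy 1 C v) (hψ : ContDiff ℝ 1 ψ)
    (hpos : ∀ x, 0 < ψ x) (hquot : Integrable (fun x => ‖∇ ψ x‖ ^ 2 / ψ x) μ) :
    Integrable (fun x => ⟪∇ v x, ∇ ψ x⟫ ^ 2 / ψ x) μ := by
  have hgrad : CkBoundedBy 0 C (∇ v) := hv.gradient
  have hgradψ : Continuous (∇ ψ) := (contDiff_gradient (m := 0) hψ (by norm_num)).continuous
  refine (hquot.const_mul (C ^ 2)).mono' (((hgrad.contDiff.continuous.inner hgradψ).pow 2).div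
    hψ.continuous fun x => (hpos x).ne').aestronglyMeasurable (ae_of_all _ fun x => ?_)
  have hψx := hpos x
  rw [norm_of_nonneg (by positivity), ← mul_div_assoc, ← sq_abs, ← mul_pow]
  gcongr
  exact (abs_real_inner_le_norm _ _).trans (by gcongr; exact hgrad.norm_le x)

variable {u φ : E → ℝ → ℝ} {s : Set ℝ} {t : ℝ}

lemma hasDerivAt_integral_energyMeasure {G : E → ℝ} (hε : 0 ≤ ε) (hF_nonneg : ∀ r, 0 ≤ F r)
    (hF : ∀ r, HasDerivAt F (f r) r) (hf : ContDiff ℝ 1 f) (hs : s ∈ 𝓝 t)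
    (hu : ContDiff ℝ 2 (fun p : E × ℝ => u p.1 p.2))
    (hu_bdd : ∀ τ ∈ s, CkBoundedBy 3 C (fun y => u y τ))
    (hpde : ∀ τ ∈ s, ∀ x, deriv (u x) τ = velocity ε f (fun y => u y τ) x)
    (hφ : ContDiff ℝ 1 (fun p : E × ℝ => φ p.1 p.2)) (hG : Integrable G μ)
    (hφ_le : ∀ τ ∈ s, ∀ x, ‖φ x τ‖ ≤ G x) (hφ'_le : ∀ τ ∈ s, ∀ x, ‖deriv (φ x) τ‖ ≤ G x) :
    HasDerivAt (fun τ => ∫ x, φ x τ ∂(energyMeasure ε F μ fun y => u y τ))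
      ((∫ x, φ x t * densityVariation ε f (fun y => u y t) (velocity ε f fun y => u y t) x ∂μ)
        + ∫ x, deriv (φ x) t ∂(energyMeasure ε F μ fun y => u y t)) t := by
  obtain ⟨K, hK⟩ := CkBoundedBy.exists_energyDensity E (k := 0)
    (contDiff_zero.2 (contDiff_one_of_hasDerivAt hF hf.continuous).continuous) ε C
  obtain ⟨L, hL⟩ := CkBoundedBy.exists_velocity E (k := 1) hf ε C
  obtain ⟨M, hM⟩ := CkBoundedBy.exists_densityVariation E (k := 0) (hf.of_le zero_le_one) ε C L
  have he (τ) (hτ : τ ∈ s) := hK _ ((hu_bdd τ hτ).of_le (by norm_num))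
  have he' (τ) (hτ : τ ∈ s) := hM _ _ ((hu_bdd τ hτ).of_le (by norm_num)) (hL _ (hu_bdd τ hτ))
  have ht : t ∈ s := mem_of_mem_nhds hs
  have hmeasure (τ) (hτ : τ ∈ s) (p : E → ℝ) :=
    integral_energyMeasure (μ := μ) hε hF_nonneg (he τ hτ).contDiff.continuous.measurable p
  simp_rw [hmeasure t ht, mul_comm (φ _ t)]
  refine HasDerivAt.congr_of_eventuallyEq ?_
    (Filter.eventually_of_mem hs fun τ hτ => hmeasure τ hτ fun x => φ x τ)
  refine hasDerivAt_integral_mul_of_dominated hs hG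
    (e := fun τ x => energyDensity ε F (fun y => u y τ) x)
    (e' := fun τ x => densityVariation ε f (fun y => u y τ) (velocity ε f fun y => u y τ) x)
    (φ := fun τ x => φ x τ) (φ' := fun τ x => deriv (φ x) τ)
    (fun τ hτ => (he τ hτ).contDiff.continuous.aestronglyMeasurable)
    (he' t ht).contDiff.continuous.aestronglyMeasurable
    (fun τ _ => (contDiff_spaceSlice hφ τ).continuous.aestronglyMeasurable)
    (continuous_deriv_apply hφ t).aestronglyMeasurable
    (fun τ hτ => (he τ hτ).norm_le) (fun τ hτ => (he' τ hτ).norm_le) hφ_le hφ'_le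
    (fun τ hτ x => ?_) (fun τ _ x => hasDerivAt_timeSlice hφ x τ)
  rw [← funext (hpde τ hτ)]
  exact hasDerivAt_energyDensity (hF _) hu

lemma integral_energyMeasure_laplacian_add {q : E → ℝ} (hε : 0 ≤ ε) (hF_nonneg : ∀ r, 0 ≤ F r)
    (hF : Continuous F) (hv : CkBoundedBy 1 C v) (hψ : CkIntegrable 2 ψ μ) (hq : Integrable q μ) :
    ∫ x, (Δ ψ x + q x) ∂(energyMeasure ε F μ v) =
      (∫ x, energyDensity ε F v x * Δ ψ x ∂μ) + ∫ x, q x ∂(energyMeasure ε F μ v) := by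
  obtain ⟨K, hK⟩ := CkBoundedBy.exists_energyDensity E (k := 0) (contDiff_zero.2 hF) ε C
  have he := hK v hv
  have hcont := he.contDiff.continuous
  simp_rw [integral_energyMeasure hε hF_nonneg hcont.measurable, mul_add]
  exact integral_add (he.mul_ckIntegrable hψ.laplacian).integrable
    (hq.bdd_mul hcont.aestronglyMeasurable (ae_of_all _ he.norm_le))

end EnergyMeasure

section TestFunctions

variable {E : Type*} [NormedAddCommGroup E] [InnerProductSpace ℝ E] [FiniteDimensional ℝ E]
  {φ : E → ℝ → ℝ} {t : ℝ}

/-- The quantity `φ + |∇φ| + |D²φ| + |∂ₜφ| + |∇φ|²/φ` whose decay makes a positive `φ` an admissible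
test function. -/
noncomputable def testFunctionSize (φ : E → ℝ → ℝ) (x : E) (t : ℝ) : ℝ :=
  φ x t + ‖∇ (fun y => φ y t) x‖ + ‖iteratedFDeriv ℝ 2 (fun y => φ y t) x‖ + |deriv (φ x) t|
    + ‖∇ (fun y => φ y t) x‖ ^ 2 / φ x t

lemma le_testFunctionSize {x : E} (hpos : 0 < φ x t) :
    ‖φ x t‖ ≤ testFunctionSize φ x t ∧ ‖∇ (fun y => φ y t) x‖ ≤ testFunctionSize φ x t ∧
      ‖iteratedFDeriv ℝ 2 (fun y => φ y t) x‖ ≤ testFunctionSize φ x t ∧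
      ‖deriv (φ x) t‖ ≤ testFunctionSize φ x t ∧
      ‖∇ (fun y => φ y t) x‖ ^ 2 / φ x t ≤ testFunctionSize φ x t := by
  have hgrad := norm_nonneg (∇ (fun y => φ y t) x)
  have hhess := norm_nonneg (iteratedFDeriv ℝ 2 (fun y => φ y t) x)
  have htime := abs_nonneg (deriv (φ x) t)
  have hquot : 0 ≤ ‖∇ (fun y => φ y t) x‖ ^ 2 / φ x t := by positivity
  rw [norm_of_nonneg hpos.le, norm_eq_abs (deriv _ _), testFunctionSize]
  refine ⟨?_, ?_, ?_, ?_, ?_⟩ <;> linarith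

variable [MeasurableSpace E] [BorelSpace E] {μ : Measure E} {G : E → ℝ}

lemma ckIntegrable_of_testFunctionSize_le (hφ : ContDiff ℝ 2 (fun y => φ y t))
    (hpos : ∀ x, 0 < φ x t) (hG : Integrable G μ) (hle : ∀ x, testFunctionSize φ x t ≤ G x) :
    CkIntegrable 2 (fun y => φ y t) μ := by
  refine .of_norm_iteratedFDeriv_le hφ (G := fun _ => G) (fun _ _ => hG) fun i hi x => ?_
  obtain ⟨h₀, h₁, h₂, -⟩ := le_testFunctionSize (hpos x)
  refine le_trans ?_ (hle x)
  interval_cases i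
  · simpa using h₀
  · simpa only [norm_iteratedFDeriv_one, gradient_eq_rieszIso_comp, Function.comp_apply,
      LinearIsometryEquiv.norm_map] using h₁
  · exact h₂

lemma integrable_norm_gradient_sq_div_of_testFunctionSize_le
    (hφ : ContDiff ℝ 1 (fun y => φ y t)) (hpos : ∀ x, 0 < φ x t) (hG : Integrable G μ)
    (hle : ∀ x, testFunctionSize φ x t ≤ G x) :
    Integrable (fun x => ‖∇ (fun y => φ y t) x‖ ^ 2 / φ x t) μ := by
  have hgrad : Continuous (∇ fun y => φ y t) := (contDiff_gradient (m := 0) hφ (by simp)).continuous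
  refine hG.mono' ((hgrad.norm.pow 2).div hφ.continuous
    fun x => (hpos x).ne').aestronglyMeasurable (ae_of_all _ fun x => ?_)
  have hposx := hpos x
  rw [norm_of_nonneg (by positivity)]
  exact (le_testFunctionSize hposx).2.2.2.2.trans (hle x)

end TestFunctions

section Euclidean

lemma hasDerivAt_doubleWell (r : ℝ) :
    HasDerivAt (fun r : ℝ => 1 / 2 * (1 - r ^ 2) ^ 2) (2 * r * (r ^ 2 - 1)) r := by
  refine ((((hasDerivAt_pow 2 r).const_sub 1).pow 2).const_mul (1 / 2)).congr_deriv ?_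
  ring

lemma integrable_exp_neg_mul_sq_norm {V : Type*} [NormedAddCommGroup V] [InnerProductSpace ℝ V]
    [FiniteDimensional ℝ V] [MeasurableSpace V] [BorelSpace V] {a : ℝ} (ha : 0 < a) :
    Integrable (fun x : V => rexp (-a * ‖x‖ ^ 2)) := by
  refine .of_integral_ne_zero ?_
  rw [GaussianFourier.integral_rexp_neg_mul_sq_norm ha]
  positivity

lemma spaceLaplacian_eq_laplacian {n : ℕ} {g : EuclideanSpace ℝ (Fin n) → ℝ}
    (hg : ContDiff ℝ 2 g) : spaceLaplacian n g = Δ g := by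
  have hdiff : Differentiable ℝ (fderiv ℝ g) :=
    (hg.fderiv_right (m := 1) (by norm_num)).differentiable (by norm_num)
  ext x
  rw [← divergence_gradient, divergence_eq_sum (EuclideanSpace.basisFun (Fin n) ℝ)]
  refine Finset.sum_congr rfl fun i _ => ?_
  rw [real_inner_comm, inner_fderiv_gradient, EuclideanSpace.basisFun_apply,
    fderiv_clm_apply (hdiff x) (differentiableAt_const _)]
  simp

end Euclidean

end AllenCahn

open AllenCahn
open scoped Gradient Laplacian Topology

theorem allen_cahn_energy_derivative_general {E : Type*} [NormedAddCommGroup E]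
    [InnerProductSpace ℝ E] [FiniteDimensional ℝ E] [MeasurableSpace E] [BorelSpace E]
    {μ : Measure E} [μ.IsAddHaarMeasure] {ε C t : ℝ} {F f : ℝ → ℝ} {u φ : E → ℝ → ℝ} {G : E → ℝ}
    {s : Set ℝ} (hε : 0 < ε) (hF_nonneg : ∀ r, 0 ≤ F r) (hF : ∀ r, HasDerivAt F (f r) r)
    (hf : ContDiff ℝ 1 f) (hs : s ∈ 𝓝 t)
    (hu : ContDiff ℝ 2 (fun p : E × ℝ => u p.1 p.2))
    (hu_bdd : ∀ τ ∈ s, CkBoundedBy 3 C (fun y => u y τ))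
    (hpde : ∀ τ ∈ s, ∀ x, deriv (u x) τ = velocity ε f (fun y => u y τ) x)
    (hφ : ContDiff ℝ 1 (fun p : E × ℝ => φ p.1 p.2)) (hφ_pos : ∀ x, 0 < φ x t)
    (hφ_int : CkIntegrable 2 (fun y => φ y t) μ)
    (hquot : Integrable (fun x => ‖∇ (fun y => φ y t) x‖ ^ 2 / φ x t) μ) (hG : Integrable G μ)
    (hφ_le : ∀ τ ∈ s, ∀ x, ‖φ x τ‖ ≤ G x) (hφ'_le : ∀ τ ∈ s, ∀ x, ‖deriv (φ x) τ‖ ≤ G x) :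
    HasDerivAt (fun τ => ∫ x, φ x τ ∂(energyMeasure ε F μ fun y => u y τ))
      (-ε * (∫ x, φ x t * (velocity ε f (fun y => u y t) x
          + ⟪∇ (fun y => u y t) x, ∇ (fun y => φ y t) x⟫ / φ x t) ^ 2 ∂μ)
        + (∫ x, (Δ (fun y => φ y t) x + deriv (φ x) t) ∂(energyMeasure ε F μ fun y => u y t))
        + ε * ∫ x, (-fderiv ℝ (fderiv ℝ fun y => φ y t) x
              (∇ (fun y => u y t) x) (∇ (fun y => u y t) x)
            + ⟪∇ (fun y => u y t) x, ∇ (fun y => φ y t) x⟫ ^ 2 / φ x t) ∂μ) t := by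
  have ht : t ∈ s := mem_of_mem_nhds hs
  have hu_bdd_one : CkBoundedBy 1 C (fun y => u y t) := (hu_bdd t ht).of_le (by norm_num)
  have hφ'_int : Integrable (fun x => deriv (φ x) t) μ :=
    hG.mono' (continuous_deriv_apply hφ t).aestronglyMeasurable (ae_of_all _ (hφ'_le t ht))
  have hvariation := integral_mul_densityVariation_velocity hε.ne' hF hf (hu_bdd t ht) hφ_int
    (fun x => (hφ_pos x).ne') (integrable_inner_gradient_sq_div hu_bdd_one
      (hφ_int.contDiff.of_le one_le_two) hφ_pos hquot)
  have hmeasure := integral_energyMeasure_laplacian_add hε.le hF_nonneg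
    (contDiff_one_of_hasDerivAt hF hf.continuous).continuous hu_bdd_one hφ_int hφ'_int
  refine (hasDerivAt_integral_energyMeasure hε.le hF_nonneg hF hf hs hu hu_bdd hpde hφ hG hφ_le
    hφ'_le).congr_deriv ?_
  rw [hvariation, hmeasure]
  ring

/-- Ilmanen's differentiation formula: if `u` solves the parabolic Allen–Cahn equation
`∂ₜu = Δu - (1/ε²)f(u)` with the standard double well, with derivative bounds on time
strips, `μᵗ` is the associated energy measure with density
`(ε/2)|∇u|² + (1/ε)F(u)` w.r.t. Lebesgue measure, and `φ > 0` is a smooth test function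
with Gaussian decay on time strips, then for all `t > 0`,
`d/dt ∫ φ dμᵗ = -ε∫φ(Δu - ε⁻²f(u) + ⟨∇u,∇φ⟩/φ)² dx + ∫(Δφ + ∂ₜφ) dμᵗ
  + ε∫(-⟨D²φ·∇u,∇u⟩ + ⟨∇u,∇φ⟩²/φ) dx`. -/
theorem allen_cahn_energy_derivative (n : ℕ) (hn : 1 ≤ n) (ε : ℝ) (hε : 0 < ε)
    (u : EuclideanSpace ℝ (Fin n) → ℝ → ℝ)
    (hsmooth : ContDiff ℝ (⊤ : ℕ∞) (fun p : EuclideanSpace ℝ (Fin n) × ℝ => u p.1 p.2))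
    (hu1 : ∀ x t, |u x t| ≤ 1)
    (hpde : ∀ x, ∀ t, 0 ≤ t →
      deriv (u x) t = spaceLaplacian n (fun y => u y t) x
        - (1 / ε ^ 2) * (2 * u x t * ((u x t) ^ 2 - 1)))
    (hbnd : ∀ T > (0 : ℝ), ∃ C : ℝ, ∀ x, ∀ t ∈ Set.Icc (0 : ℝ) T,
      (∀ i ≤ 3, ‖iteratedFDeriv ℝ i (fun y => u y t) x‖ ≤ C) ∧ |deriv (u x) t| ≤ C)
    (φ : EuclideanSpace ℝ (Fin n) → ℝ → ℝ)
    (hφsmooth : ContDiff ℝ (⊤ : ℕ∞) (fun p : EuclideanSpace ℝ (Fin n) × ℝ => φ p.1 p.2))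
    (hφpos : ∀ x t, 0 < φ x t)
    (hφdecay : ∀ T > (0 : ℝ), ∃ C > (0 : ℝ), ∃ a > (0 : ℝ), ∀ x, ∀ t ∈ Set.Icc (0 : ℝ) T,
      φ x t + ‖gradient (fun y => φ y t) x‖ + ‖iteratedFDeriv ℝ 2 (fun y => φ y t) x‖
          + |deriv (φ x) t| + ‖gradient (fun y => φ y t) x‖ ^ 2 / φ x t
        ≤ C * Real.exp (-a * ‖x‖ ^ 2))
    (μ : ℝ → Measure (EuclideanSpace ℝ (Fin n)))
    (hμ : ∀ t, μ t = volume.withDensity (fun x =>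
      ENNReal.ofReal ((ε / 2) * ‖gradient (fun y => u y t) x‖ ^ 2
        + (1 / ε) * ((1 / 2) * (1 - (u x t) ^ 2) ^ 2)))) :
    ∀ t > (0 : ℝ), HasDerivAt (fun τ => ∫ x, φ x τ ∂(μ τ))
      (-ε * (∫ x, φ x t *
          (spaceLaplacian n (fun y => u y t) x
            - (1 / ε ^ 2) * (2 * u x t * ((u x t) ^ 2 - 1))
            + ⟪gradient (fun y => u y t) x, gradient (fun y => φ y t) x⟫ / φ x t) ^ 2)
        + (∫ x, (spaceLaplacian n (fun y => φ y t) x + deriv (φ x) t) ∂(μ t))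
        + ε * (∫ x,
            (-(fderiv ℝ (fun z => fderiv ℝ (fun w => φ w t) z) x
                (gradient (fun y => u y t) x) (gradient (fun y => u y t) x))
              + ⟪gradient (fun y => u y t) x, gradient (fun y => φ y t) x⟫ ^ 2
                / φ x t))) t := by
  intro t ht
  have htmem : t ∈ Set.Icc 0 (t + 1) := ⟨ht.le, by linarith⟩
  obtain ⟨C, hC⟩ := hbnd (t + 1) (by linarith)
  obtain ⟨A, -, a, ha, hφ_le⟩ := hφdecay (t + 1) (by linarith)
  have hG := (integrable_exp_neg_mul_sq_norm (V := EuclideanSpace ℝ (Fin n)) ha).const_mul A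
  have hu (k : ℕ) (τ : ℝ) := contDiff_spaceSlice (contDiff_infty.1 hsmooth k) τ
  have hφ (k : ℕ) := contDiff_spaceSlice (contDiff_infty.1 hφsmooth k) t
  have hlap (τ : ℝ) := spaceLaplacian_eq_laplacian (hu 2 τ)
  have hderiv := allen_cahn_energy_derivative_general (μ := volume) hε (fun r => by positivity)
    hasDerivAt_doubleWell (by fun_prop) (Icc_mem_nhds ht (lt_add_one t))
    (contDiff_infty.1 hsmooth 2) (fun τ hτ => ⟨hu 3 τ, fun i hi x => (hC x τ hτ).1 i hi⟩)
    (fun τ hτ x => (hpde x τ hτ.1).trans (by rw [hlap]; rfl))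
    (contDiff_infty.1 hφsmooth 1) (hφpos · t)
    (ckIntegrable_of_testFunctionSize_le (hφ 2) (hφpos · t) hG (hφ_le · t htmem))
    (integrable_norm_gradient_sq_div_of_testFunctionSize_le (hφ 1) (hφpos · t) hG
      (hφ_le · t htmem)) hG
    (fun τ hτ x => (le_testFunctionSize (hφpos x τ)).1.trans (hφ_le x τ hτ))
    (fun τ hτ x => (le_testFunctionSize (hφpos x τ)).2.2.2.1.trans (hφ_le x τ hτ))
  rwa [hlap, spaceLaplacian_eq_laplacian (hφ 2), funext hμ]
end

section
/- Fix n ≥ 1 and ε > 0, and let u : ℝⁿ × [0,∞) → ℝ be a smooth solution of ∂ₜu = Δu − (1/ε²) f(u) with f(u) = 2u(u²−1), |u| ≤ 1, such that for every T > 0 the function u and its spatial derivatives up to third order and its time derivative are uniformly bounded on ℝⁿ × [0,T]. Let μᵗ denote the measure with density (ε/2)|∇u(x,t)|² + (1/ε)F(u(x,t)) with respect to Lebesgue measure, F(u) = (1/2)(1−u²)². Assume the discrepancy is nonpositive at every time, i.e. (ε/2)|∇u(x,t)|² ≤ (1/ε)F(u(x,t)) for all x ∈ ℝⁿ and t ≥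 0. Then for every y ∈ ℝⁿ and all 0 ≤ t₁ ≤ t₂ < s, ∫ ρ_{y,s}(x,t₂) dμ^{t₂}(x) ≤ ∫ ρ_{y,s}(x,t₁) dμ^{t₁}(x), where ρ_{y,s}(x,t) = (4π(s−t))^{−(n−1)/2} exp(−|x−y|²/(4(s−t))). -/
open Real MeasureTheory

/-!
Let `ρ` be the backward heat kernel, `a = 1 / (2 * (s - t))`, so that `∇ρ = -ρ a (x - y)`, and let
`e` and `ξ` be the densities of energy and discrepancy. With the defect
`g = ∂ₜu - ⟪∇u, a (x - y)⟫` and the flux `V = ε g ∇u + e a (x - y)`, the equation gives the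
pointwise balance
`∂ₜ(ρ e) = div (ρ V) + ρ (a ξ - ε g²)`.
In codimension one the kernel has exactly the power of `s - t` which makes the terms in `a`
add up to `a ξ`. The divergence integrates to zero because of the Gaussian decay of `ρ`, so the
weighted energy decreases as soon as `ξ ≤ 0`.
-/

open scoped Gradient Laplacian InnerProductSpace Asymptotics

section Divergence

variable {E G : Type*} [NormedAddCommGroup E] [NormedAddCommGroup G] [NormedSpace ℝ G]

section NormedSpace

variable [NormedSpace ℝ E] [FiniteDimensional ℝ E]

/-- The trace on the continuous endomorphisms of a finite-dimensional space, as a continuous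
linear functional, so that it commutes with derivatives and integrals. -/
noncomputable def traceCLM (E : Type*) [NormedAddCommGroup E] [NormedSpace ℝ E]
    [FiniteDimensional ℝ E] : (E →L[ℝ] E) →L[ℝ] ℝ :=
  (LinearMap.trace ℝ E ∘ₗ ContinuousLinearMap.coeLM ℝ).toContinuousLinearMap

lemma traceCLM_apply (A : E →L[ℝ] E) : traceCLM E A = LinearMap.trace ℝ E A := rfl

/-- The divergence of a vector field, as the trace of its derivative. -/
noncomputable def divergence (X : E → E) (x : E) : ℝ :=
  traceCLM E (fderiv ℝ X x)

lemma divergence_smul {φ : E → ℝ} {X : E → E} {x : E} (hφ : DifferentiableAt ℝ φ x)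
    (hX : DifferentiableAt ℝ X x) :
    divergence (fun x => φ x • X x) x = φ x * divergence X x + fderiv ℝ φ x (X x) := by
  have trace_smulRight : traceCLM E ((fderiv ℝ φ x).smulRight (X x)) = fderiv ℝ φ x (X x) := by
    rw [traceCLM_apply]
    exact LinearMap.trace_smulRight (fderiv ℝ φ x : E →ₗ[ℝ] ℝ) (X x)
  rw [divergence, fderiv_fun_smul hφ hX, map_add, map_smul, trace_smulRight, smul_eq_mul,
    divergence]

lemma divergence_add {X Y : E → E} {x : E} (hX : DifferentiableAt ℝ X x)
    (hY : DifferentiableAt ℝ Y x) :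
    divergence (fun x => X x + Y x) x = divergence X x + divergence Y x := by
  rw [divergence, fderiv_fun_add hX hY, map_add, divergence, divergence]

lemma divergence_const_smul_sub (a : ℝ) (y x : E) :
    divergence (fun x => a • (x - y)) x = a * Module.finrank ℝ E := by
  have h : HasFDerivAt (fun x => a • (x - y)) (a • ContinuousLinearMap.id ℝ E) x :=
    ((hasFDerivAt_id x).sub_const y).const_smul a
  rw [divergence, h.fderiv, map_smul, traceCLM_apply, ContinuousLinearMap.coe_id,
    LinearMap.trace_id, smul_eq_mul]

variable [MeasurableSpace E] [BorelSpace E] {μ : Measure E} [μ.IsAddHaarMeasure]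

lemma integral_fderiv_eq_zero {f : E → G} (hf : Differentiable ℝ f) (hint : Integrable f μ)
    (hint' : Integrable (fderiv ℝ f) μ) : ∫ x, fderiv ℝ f x ∂μ = 0 := by
  ext v
  rw [ContinuousLinearMap.integral_apply hint']
  simpa using integral_smul_fderiv_eq_neg_fderiv_smul_of_integrable (𝕜 := ℝ) (μ := μ)
    (f := fun _ : E => (1 : ℝ)) (g := f) (v := v) (by simp)
    (by simpa using hint'.apply_continuousLinearMap v) (by simpa using hint)
    (fun x _ => differentiableAt_const _) (fun x _ => hf x)

theorem integral_divergence_eq_zero {X : E → E} (hX : Differentiable ℝ X)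
    (hint : Integrable X μ) (hint' : Integrable (fderiv ℝ X) μ) :
    ∫ x, divergence X x ∂μ = 0 := by
  simp only [divergence]
  rw [ContinuousLinearMap.integral_comp_comm _ hint', integral_fderiv_eq_zero hX hint hint',
    map_zero]

end NormedSpace

section InnerProductSpace

variable [InnerProductSpace ℝ E]

section Complete

variable [CompleteSpace E] {v : E → ℝ}

lemma contDiff_gradient {m n : WithTop ℕ∞} (hv : ContDiff ℝ n v) (hmn : m + 1 ≤ n) :
    ContDiff ℝ m (∇ v) :=
  (InnerProductSpace.toDual ℝ E).symm.contDiff.comp (hv.fderiv_right hmn)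

lemma differentiable_gradient (hv : ContDiff ℝ 2 v) : Differentiable ℝ (∇ v) :=
  (contDiff_gradient (m := 1) hv (by norm_num)).differentiable one_ne_zero

lemma norm_iteratedFDeriv_gradient (v : E → ℝ) (k : ℕ) (x : E) :
    ‖iteratedFDeriv ℝ k (∇ v) x‖ = ‖iteratedFDeriv ℝ (k + 1) v x‖ :=
  ((InnerProductSpace.toDual ℝ E).symm.norm_iteratedFDeriv_comp_left _ _ _).trans
    norm_iteratedFDeriv_fderiv

lemma inner_fderiv_gradient (v : E → ℝ) (x ξ η : E) :
    ⟪fderiv ℝ (∇ v) x ξ, η⟫_ℝ = fderiv ℝ (fderiv ℝ v) x ξ η := by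
  have h := (InnerProductSpace.toDual ℝ E).symm.comp_fderiv (f := fderiv ℝ v) (x := x)
  exact (congrArg (fun A : E →L[ℝ] E => ⟪A ξ, η⟫_ℝ) h).trans InnerProductSpace.toDual_symm_apply

lemma inner_fderiv_gradient_comm {x : E} (hv : ContDiffAt ℝ 2 v x) (ξ η : E) :
    ⟪fderiv ℝ (∇ v) x ξ, η⟫_ℝ = ⟪ξ, fderiv ℝ (∇ v) x η⟫_ℝ := by
  rw [real_inner_comm (fderiv ℝ (∇ v) x η), inner_fderiv_gradient, inner_fderiv_gradient]
  exact hv.isSymmSndFDerivAt (by simp) ξ η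

end Complete

variable [FiniteDimensional ℝ E]

lemma divergence_gradient (v : E → ℝ) (x : E) : divergence (∇ v) x = (Δ v) x := by
  rw [divergence, traceCLM_apply, LinearMap.trace_eq_sum_inner _ (stdOrthonormalBasis ℝ E),
    InnerProductSpace.laplacian_eq_iteratedFDeriv_stdOrthonormalBasis]
  refine Finset.sum_congr rfl fun i _ => ?_
  rw [real_inner_comm, iteratedFDeriv_two_apply]
  exact inner_fderiv_gradient _ _ _ _

end InnerProductSpace

end Divergence

section PolyGrowth

variable {E F G H : Type*} [NormedAddCommGroup E] [NormedAddCommGroup F]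

/-- Growth of at most polynomial order; unlike `Function.HasTemperateGrowth`, nothing is asked of
the derivatives. -/
def HasPolyGrowth (f : E → F) : Prop :=
  ∃ k : ℕ, f =O[⊤] fun x => (1 + ‖x‖) ^ k

namespace HasPolyGrowth

variable {f : E → F}

lemma of_le {C : ℝ} {k : ℕ} (h : ∀ x, ‖f x‖ ≤ C * (1 + ‖x‖) ^ k) : HasPolyGrowth f := by
  refine ⟨k, Asymptotics.isBigO_top.2 ⟨C, fun x => ?_⟩⟩
  rw [norm_of_nonneg (by positivity : 0 ≤ (1 + ‖x‖) ^ k)]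
  exact h x

lemma of_bounded {C : ℝ} (h : ∀ x, ‖f x‖ ≤ C) : HasPolyGrowth f :=
  of_le (C := C) (k := 0) (by simpa using h)

lemma exists_le (hf : HasPolyGrowth f) :
    ∃ (C : ℝ) (k : ℕ), ∀ x, ‖f x‖ ≤ C * (1 + ‖x‖) ^ k := by
  obtain ⟨k, hk⟩ := hf
  obtain ⟨C, hC⟩ := Asymptotics.isBigO_top.1 hk
  refine ⟨C, k, fun x => (hC x).trans_eq ?_⟩
  rw [norm_of_nonneg (by positivity : 0 ≤ (1 + ‖x‖) ^ k)]

lemma neg (hf : HasPolyGrowth f) : HasPolyGrowth fun x => -f x :=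
  hf.imp fun _ h => h.neg_left

lemma add {g : E → F} (hf : HasPolyGrowth f) (hg : HasPolyGrowth g) :
    HasPolyGrowth fun x => f x + g x := by
  obtain ⟨k, hk⟩ := hf
  obtain ⟨l, hl⟩ := hg
  have raise {m : ℕ} (hm : m ≤ max k l) :
      (fun x : E => (1 + ‖x‖) ^ m) =O[⊤] fun x => (1 + ‖x‖) ^ max k l :=
    .of_norm_le fun x => by
      rw [norm_of_nonneg (by positivity)]
      exact pow_le_pow_right₀ (by simp) hm
  exact ⟨max k l, (hk.trans (raise (le_max_left k l))).add (hl.trans (raise (le_max_right k l)))⟩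

lemma sub {g : E → F} (hf : HasPolyGrowth f) (hg : HasPolyGrowth g) :
    HasPolyGrowth fun x => f x - g x := by
  simpa only [sub_eq_add_neg] using hf.add hg.neg

variable [NormedSpace ℝ F] [NormedAddCommGroup G] [NormedSpace ℝ G]
  [NormedAddCommGroup H] [NormedSpace ℝ H]

lemma bilin {g : E → G} (B : F →L[ℝ] G →L[ℝ] H) (hf : HasPolyGrowth f) (hg : HasPolyGrowth g) :
    HasPolyGrowth fun x => B (f x) (g x) := by
  obtain ⟨k, hk⟩ := hf
  obtain ⟨l, hl⟩ := hg
  have hB : (fun x => B (f x) (g x)) =O[⊤] fun x => ‖f x‖ * ‖g x‖ :=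
    Asymptotics.isBigO_top.2 ⟨‖B‖, fun x => by
      simpa [mul_assoc] using B.le_opNorm₂ (f x) (g x)⟩
  refine ⟨k + l, hB.trans ?_⟩
  simpa only [pow_add] using hk.norm_left.mul hl.norm_left

end HasPolyGrowth

variable [NormedSpace ℝ E] [NormedSpace ℝ F] [NormedAddCommGroup G] [NormedSpace ℝ G]
  [NormedAddCommGroup H] [NormedSpace ℝ H]

/-- Continuously differentiable functions which, together with their derivative, grow at most
polynomially: the class in which integration by parts against a Gaussian is licit. -/
structure C1PolyGrowth (f : E → F) : Prop where
  contDiff : ContDiff ℝ 1 f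
  growth : HasPolyGrowth f
  growth_fderiv : HasPolyGrowth (fderiv ℝ f)

namespace C1PolyGrowth

variable {f : E → F}

lemma differentiable (hf : C1PolyGrowth f) : Differentiable ℝ f :=
  hf.contDiff.differentiable one_ne_zero

lemma of_bounded {C C' : ℝ} (hf : ContDiff ℝ 1 f) (h : ∀ x, ‖f x‖ ≤ C)
    (h' : ∀ x, ‖fderiv ℝ f x‖ ≤ C') : C1PolyGrowth f :=
  ⟨hf, .of_bounded h, .of_bounded h'⟩

lemma const (c : F) : C1PolyGrowth fun _ : E => c :=
  of_bounded contDiff_const (fun _ => le_rfl) (C' := 0) (by simp)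

lemma id : C1PolyGrowth fun x : E => x where
  contDiff := contDiff_id
  growth := .of_le (C := 1) (k := 1) (by simp)
  growth_fderiv := .of_bounded (C := 1) fun x => by
    rw [fderiv_fun_id]
    exact ContinuousLinearMap.norm_id_le

lemma add {g : E → F} (hf : C1PolyGrowth f) (hg : C1PolyGrowth g) :
    C1PolyGrowth fun x => f x + g x where
  contDiff := hf.contDiff.add hg.contDiff
  growth := hf.growth.add hg.growth
  growth_fderiv := by
    have h : fderiv ℝ (fun x => f x + g x) = fun x => fderiv ℝ f x + fderiv ℝ g x :=
      funext fun x => fderiv_fun_add (hf.differentiable x) (hg.differentiable x)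
    exact h ▸ hf.growth_fderiv.add hg.growth_fderiv

lemma bilin {g : E → G} (B : F →L[ℝ] G →L[ℝ] H) (hf : C1PolyGrowth f) (hg : C1PolyGrowth g) :
    C1PolyGrowth fun x => B (f x) (g x) where
  contDiff := B.isBoundedBilinearMap.contDiff.comp (hf.contDiff.prodMk hg.contDiff)
  growth := hf.growth.bilin B hg.growth
  growth_fderiv := by
    have h : fderiv ℝ (fun x => B (f x) (g x)) =
        fun x => B.precompR E (f x) (fderiv ℝ g x) + B.precompL E (fderiv ℝ f x) (g x) :=
      funext fun x =>
        B.fderiv_of_bilinear (hf.differentiable x) (hg.differentiable x)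
    exact h ▸ (hf.growth.bilin _ hg.growth_fderiv).add (hf.growth_fderiv.bilin _ hg.growth)

lemma smul {φ : E → ℝ} (hφ : C1PolyGrowth φ) (hf : C1PolyGrowth f) :
    C1PolyGrowth fun x => φ x • f x :=
  hφ.bilin (ContinuousLinearMap.lsmul ℝ ℝ) hf

lemma const_smul (c : ℝ) (hf : C1PolyGrowth f) : C1PolyGrowth fun x => c • f x :=
  (const c).smul hf

lemma sub {g : E → F} (hf : C1PolyGrowth f) (hg : C1PolyGrowth g) :
    C1PolyGrowth fun x => f x - g x := by
  simpa only [neg_smul, one_smul, ← sub_eq_add_neg] using hf.add (hg.const_smul (-1))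

lemma inner {F : Type*} [NormedAddCommGroup F] [InnerProductSpace ℝ F] {f g : E → F}
    (hf : C1PolyGrowth f) (hg : C1PolyGrowth g) : C1PolyGrowth fun x => ⟪f x, g x⟫_ℝ :=
  hf.bilin (innerSL ℝ) hg

lemma comp_of_bounded {φ : ℝ → ℝ} {v : E → ℝ} {C : ℝ} (hφ : ContDiff ℝ 1 φ) (hv : C1PolyGrowth v)
    (hC : ∀ x, ‖v x‖ ≤ C) : C1PolyGrowth fun x => φ (v x) where
  contDiff := hφ.comp hv.contDiff
  growth := by
    obtain ⟨M, hM⟩ := (isCompact_closedBall (0 : ℝ) C).exists_bound_of_continuousOn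
      hφ.continuous.continuousOn
    exact .of_bounded fun x => hM (v x) (by simpa using hC x)
  growth_fderiv := by
    obtain ⟨M, hM⟩ := (isCompact_closedBall (0 : ℝ) C).exists_bound_of_continuousOn
      (hφ.continuous_deriv le_rfl).continuousOn
    have hderiv : HasPolyGrowth fun x => deriv φ (v x) :=
      .of_bounded fun x => hM (v x) (by simpa using hC x)
    have hchain : fderiv ℝ (fun x => φ (v x)) = fun x => deriv φ (v x) • fderiv ℝ v x :=
      funext fun x => ((hφ.differentiable one_ne_zero (v x)).hasDerivAt.comp_hasFDerivAt x
        (hv.differentiable x).hasFDerivAt).fderiv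
    exact hchain ▸ hderiv.bilin (ContinuousLinearMap.lsmul ℝ ℝ) hv.growth_fderiv

end C1PolyGrowth

end PolyGrowth

section Gaussian

variable {E F : Type*} [NormedAddCommGroup E] [InnerProductSpace ℝ E] [FiniteDimensional ℝ E]
  [MeasurableSpace E] [BorelSpace E] [NormedAddCommGroup F] [NormedSpace ℝ F]

lemma integrable_exp_neg_mul_dist_sq {b : ℝ} (hb : 0 < b) (y : E) :
    Integrable fun x : E => exp (-b * dist x y ^ 2) := by
  have h : Integrable fun x : E => exp (-b * ‖x‖ ^ 2) := by
    have h' := (GaussianFourier.integrable_cexp_neg_mul_sq_norm_add (V := E) (b := b)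
      (by simpa using hb) 0 0).norm
    refine h'.congr (.of_forall fun x => ?_)
    simp [Complex.norm_exp, ← Complex.ofReal_pow]
  simpa only [dist_eq_norm] using h.comp_sub_right y

lemma one_add_pow_mul_exp_neg_mul_sq_le {b r : ℝ} (hb : 0 < b) (hr : 0 ≤ r) (k : ℕ) :
    (1 + r) ^ k * exp (-b * r ^ 2) ≤
      k.factorial * exp (1 + 1 / (2 * b)) * exp (-(b / 2) * r ^ 2) := by
  have hpow : (1 + r) ^ k ≤ k.factorial * exp (1 + r) := by
    rw [← div_le_iff₀' (by positivity)]
    exact pow_div_factorial_le_exp (1 + r) (by positivity) k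
  have hamgm : r ≤ 1 / (2 * b) + b / 2 * r ^ 2 := by
    have h : (b * r - 1) ^ 2 / (2 * b) = b / 2 * r ^ 2 - r + 1 / (2 * b) := by
      field_simp
      ring
    have : 0 ≤ (b * r - 1) ^ 2 / (2 * b) := by positivity
    linarith
  calc (1 + r) ^ k * exp (-b * r ^ 2)
      ≤ k.factorial * exp (1 + r) * exp (-b * r ^ 2) := by gcongr
    _ = k.factorial * exp (1 + r + -b * r ^ 2) := by rw [exp_add (1 + r), mul_assoc]
    _ ≤ k.factorial * exp (1 + 1 / (2 * b) + -(b / 2) * r ^ 2) := by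
      gcongr k.factorial * exp ?_
      linarith
    _ = _ := by rw [exp_add, mul_assoc]

lemma integrable_exp_neg_mul_dist_sq_mul_pow {b : ℝ} (hb : 0 < b) (y : E) (k : ℕ) :
    Integrable fun x : E => exp (-b * dist x y ^ 2) * (1 + ‖x‖) ^ k := by
  refine ((integrable_exp_neg_mul_dist_sq (half_pos hb) y).const_mul
    ((1 + ‖y‖) ^ k * (k.factorial * exp (1 + 1 / (2 * b))))).mono'
    (by fun_prop) (.of_forall fun x => ?_)
  rw [norm_of_nonneg (by positivity)]
  have hx : 1 + ‖x‖ ≤ (1 + ‖y‖) * (1 + dist x y) := by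
    have hle : ‖x‖ ≤ dist x y + ‖y‖ := by simpa [dist_eq_norm] using norm_add_le (x - y) y
    have : 0 ≤ ‖y‖ * dist x y := by positivity
    linarith
  calc exp (-b * dist x y ^ 2) * (1 + ‖x‖) ^ k
      ≤ exp (-b * dist x y ^ 2) * ((1 + ‖y‖) * (1 + dist x y)) ^ k := by gcongr
    _ = (1 + ‖y‖) ^ k * ((1 + dist x y) ^ k * exp (-b * dist x y ^ 2)) := by
      rw [mul_pow]
      ring
    _ ≤ (1 + ‖y‖) ^ k *
        (k.factorial * exp (1 + 1 / (2 * b)) * exp (-(b / 2) * dist x y ^ 2)) := by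
      exact mul_le_mul_of_nonneg_left (one_add_pow_mul_exp_neg_mul_sq_le hb dist_nonneg k)
        (by positivity)
    _ = _ := by ring

lemma HasPolyGrowth.integrable_exp_neg_mul_dist_sq_smul {f : E → F} (hf : HasPolyGrowth f)
    (hf_cont : Continuous f) {b : ℝ} (hb : 0 < b) (y : E) :
    Integrable fun x => exp (-b * dist x y ^ 2) • f x := by
  obtain ⟨C, k, hC⟩ := hf.exists_le
  refine ((integrable_exp_neg_mul_dist_sq_mul_pow hb y k).const_mul C).mono'
    (by fun_prop) (.of_forall fun x => ?_)
  rw [norm_smul, norm_of_nonneg (exp_pos _).le, mul_left_comm]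
  gcongr
  exact hC x

end Gaussian

section BackwardHeatKernel

variable {E F : Type*} [NormedAddCommGroup E]

/-- The backward heat kernel of dimension `d` with pole at `(y, s)`. The dimension is independent
of the ambient space: the monotonicity formula uses codimension one. -/
noncomputable def backwardHeatKernel (d : ℝ) (y : E) (s : ℝ) (x : E) (t : ℝ) : ℝ :=
  (4 * π * (s - t)) ^ (-(d / 2)) * exp (-(dist x y) ^ 2 / (4 * (s - t)))

variable (d : ℝ) {s t : ℝ} (y : E)

lemma backwardHeatKernel_nonneg (hts : t ≤ s) (x : E) : 0 ≤ backwardHeatKernel d y s x t := by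
  have : 0 ≤ s - t := sub_nonneg.2 hts
  rw [backwardHeatKernel]
  positivity

lemma backwardHeatKernel_eq (s t : ℝ) (x : E) :
    backwardHeatKernel d y s x t =
      (4 * π * (s - t)) ^ (-(d / 2)) * exp (-(4 * (s - t))⁻¹ * dist x y ^ 2) := by
  rw [backwardHeatKernel, neg_div (4 * (s - t)), div_eq_inv_mul (dist x y ^ 2), neg_mul]

lemma continuous_backwardHeatKernel (s t : ℝ) :
    Continuous fun x => backwardHeatKernel d y s x t := by
  unfold backwardHeatKernel
  fun_prop

lemma exists_backwardHeatKernel_le (t₁ : ℝ) {t₂ : ℝ} (ht : t₂ < s) :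
    ∃ K, ∀ t ∈ Set.Icc t₁ t₂, ∀ x,
      backwardHeatKernel d y s x t ≤ K * exp (-(4 * (s - t₁))⁻¹ * dist x y ^ 2) := by
  have hcont : ContinuousOn (fun t => (4 * π * (s - t)) ^ (-(d / 2))) (Set.Icc t₁ t₂) := by
    refine ContinuousOn.rpow_const (by fun_prop) fun t h => Or.inl ?_
    have : 0 < s - t := by linarith [h.2]
    positivity
  obtain ⟨K, hK⟩ := isCompact_Icc.exists_bound_of_continuousOn hcont
  refine ⟨K, fun t h x => ?_⟩
  have hst : 0 < s - t := by linarith [h.2]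
  have hexp : (4 * (s - t₁))⁻¹ ≤ (4 * (s - t))⁻¹ := by
    gcongr
    exact h.1
  rw [backwardHeatKernel_eq]
  gcongr
  · exact (norm_nonneg _).trans (hK t h)
  · exact (le_norm_self _).trans (hK t h)

lemma hasDerivAt_backwardHeatKernel [NormedSpace ℝ E] (hts : t < s) (x : E) :
    HasDerivAt (backwardHeatKernel d y s x)
      (backwardHeatKernel d y s x t *
        (d * (2 * (s - t))⁻¹ - ‖(2 * (s - t))⁻¹ • (x - y)‖ ^ 2)) t := by
  have hτ : 0 < s - t := sub_pos.2 hts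
  have hsub : HasDerivAt (fun t => s - t) (-1) t := (hasDerivAt_id t).const_sub s
  have hpow := (hsub.const_mul (4 * π)).rpow_const (p := -(d / 2)) (Or.inl (by positivity))
  have hexp := ((hsub.const_mul 4).fun_inv (by positivity)).const_mul (-(dist x y) ^ 2) |>.exp
  refine (hpow.mul hexp).congr_deriv ?_
  rw [backwardHeatKernel, rpow_sub_one (by positivity), norm_smul, ← dist_eq_norm,
    norm_of_nonneg (by positivity), div_eq_mul_inv (-(dist x y) ^ 2)]
  field_simp
  ring

variable [InnerProductSpace ℝ E]

lemma hasFDerivAt_backwardHeatKernel (s t : ℝ) (x : E) :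
    HasFDerivAt (fun x => backwardHeatKernel d y s x t)
      (-(backwardHeatKernel d y s x t • innerSL ℝ ((2 * (s - t))⁻¹ • (x - y)))) x := by
  have hdist : HasFDerivAt (fun x => dist x y ^ 2) (2 • innerSL ℝ (x - y)) x := by
    simpa [dist_eq_norm] using ((hasFDerivAt_id x).sub_const y).norm_sq
  simp only [backwardHeatKernel_eq]
  refine ((hdist.const_mul _).exp.const_mul _).congr_fderiv ?_
  ext ξ
  simp only [map_sub, map_smul, smul_apply, sub_apply, neg_apply, coe_innerSL_apply, nsmul_eq_mul,
    smul_eq_mul, Nat.cast_ofNat]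
  field_simp
  ring

variable {X : E → E}

lemma fderiv_backwardHeatKernel_smul (hX : Differentiable ℝ X) (s t : ℝ) :
    fderiv ℝ (fun x => backwardHeatKernel d y s x t • X x) = fun x =>
      backwardHeatKernel d y s x t •
        (fderiv ℝ X x - (innerSL ℝ ((2 * (s - t))⁻¹ • (x - y))).smulRight (X x)) := by
  ext x ξ
  rw [((hasFDerivAt_backwardHeatKernel d y s t x).fun_smul (hX x).hasFDerivAt).fderiv]
  simp only [add_apply, sub_apply, smul_apply, neg_apply, ContinuousLinearMap.smulRight_apply,
    smul_eq_mul]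
  module

variable [FiniteDimensional ℝ E]

lemma divergence_backwardHeatKernel_smul (hX : Differentiable ℝ X) (s t : ℝ) (x : E) :
    divergence (fun x => backwardHeatKernel d y s x t • X x) x =
      backwardHeatKernel d y s x t *
        (divergence X x - ⟪(2 * (s - t))⁻¹ • (x - y), X x⟫_ℝ) := by
  have hρ := hasFDerivAt_backwardHeatKernel d y s t x
  rw [divergence_smul hρ.differentiableAt (hX x), hρ.fderiv, neg_apply, smul_apply,
    innerSL_apply_apply, smul_eq_mul]
  ring

variable [MeasurableSpace E] [BorelSpace E]

lemma HasPolyGrowth.integrable_backwardHeatKernel_smul [NormedAddCommGroup F] [NormedSpace ℝ F]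
    {f : E → F} (hf : HasPolyGrowth f) (hf_cont : Continuous f) (hts : t < s) :
    Integrable fun x => backwardHeatKernel d y s x t • f x := by
  have hb : 0 < (4 * (s - t))⁻¹ := by
    have : 0 < s - t := sub_pos.2 hts
    positivity
  simp only [backwardHeatKernel_eq, mul_smul]
  exact (hf.integrable_exp_neg_mul_dist_sq_smul hf_cont hb y).smul
    ((4 * π * (s - t)) ^ (-(d / 2)))

lemma HasPolyGrowth.exists_integrable_norm_backwardHeatKernel_mul_le {g : E → ℝ}
    (hg : HasPolyGrowth g) (hg_cont : Continuous g) {t₁ t₂ : ℝ} (h₁₂ : t₁ ≤ t₂) (h₂s : t₂ < s) :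
    ∃ G : E → ℝ, Integrable G ∧ ∀ t ∈ Set.Icc t₁ t₂, ∀ x r, ‖r‖ ≤ g x →
      ‖backwardHeatKernel d y s x t * r‖ ≤ G x := by
  have hb : 0 < (4 * (s - t₁))⁻¹ := by
    have : 0 < s - t₁ := sub_pos.2 (h₁₂.trans_lt h₂s)
    positivity
  obtain ⟨K, hK⟩ := exists_backwardHeatKernel_le d y t₁ h₂s
  refine ⟨_, (hg.integrable_exp_neg_mul_dist_sq_smul hg_cont hb y).const_mul K,
    fun t ht x r hr => ?_⟩
  have hρ : 0 ≤ backwardHeatKernel d y s x t :=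
    backwardHeatKernel_nonneg d y (ht.2.trans h₂s.le) x
  rw [norm_mul, norm_of_nonneg hρ, smul_eq_mul, ← mul_assoc]
  exact mul_le_mul (hK t ht x) hr (norm_nonneg r) (hρ.trans (hK t ht x))

lemma C1PolyGrowth.integrable_fderiv_backwardHeatKernel_smul (hX : C1PolyGrowth X)
    (hts : t < s) : Integrable (fderiv ℝ fun x => backwardHeatKernel d y s x t • X x) := by
  set z : E → E := fun x => (2 * (s - t))⁻¹ • (x - y)
  have hz : C1PolyGrowth z := (C1PolyGrowth.id.sub (.const y)).const_smul _
  have hX' : Continuous (fderiv ℝ X) := hX.contDiff.continuous_fderiv one_ne_zero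
  have hzX : C1PolyGrowth fun x => (innerSL ℝ (z x)).smulRight (X x) :=
    hz.bilin ((ContinuousLinearMap.smulRightL ℝ E E).comp (innerSL ℝ)) hX
  have hgrowth : HasPolyGrowth fun x => fderiv ℝ X x - (innerSL ℝ (z x)).smulRight (X x) :=
    hX.growth_fderiv.sub hzX.growth
  rw [fderiv_backwardHeatKernel_smul d y hX.differentiable]
  exact hgrowth.integrable_backwardHeatKernel_smul d y (hX'.sub hzX.contDiff.continuous) hts

lemma C1PolyGrowth.integrable_backwardHeatKernel_mul_divergence_sub (hX : C1PolyGrowth X)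
    (hts : t < s) :
    Integrable fun x => backwardHeatKernel d y s x t *
      (divergence X x - ⟪(2 * (s - t))⁻¹ • (x - y), X x⟫_ℝ) := by
  simp only [← divergence_backwardHeatKernel_smul d y hX.differentiable]
  exact (traceCLM E).integrable_comp (hX.integrable_fderiv_backwardHeatKernel_smul d y hts)

theorem C1PolyGrowth.integral_backwardHeatKernel_mul_divergence_sub (hX : C1PolyGrowth X)
    (hts : t < s) :
    ∫ x, backwardHeatKernel d y s x t *
      (divergence X x - ⟪(2 * (s - t))⁻¹ • (x - y), X x⟫_ℝ) = 0 := by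
  have hdiff : Differentiable ℝ fun x => backwardHeatKernel d y s x t • X x := fun x =>
    (hasFDerivAt_backwardHeatKernel d y s t x).differentiableAt.smul (hX.differentiable x)
  simp only [← divergence_backwardHeatKernel_smul d y hX.differentiable]
  exact integral_divergence_eq_zero hdiff
    (hX.growth.integrable_backwardHeatKernel_smul d y hX.contDiff.continuous hts)
    (hX.integrable_fderiv_backwardHeatKernel_smul d y hts)

end BackwardHeatKernel

section Laplacian

variable {E : Type*} [NormedAddCommGroup E] [InnerProductSpace ℝ E] [FiniteDimensional ℝ E]
  {v : E → ℝ}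

lemma norm_laplacian_le (v : E → ℝ) (x : E) :
    ‖(Δ v) x‖ ≤ ‖traceCLM E‖ * ‖iteratedFDeriv ℝ 2 v x‖ := by
  rw [← divergence_gradient, ← norm_iteratedFDeriv_gradient, norm_iteratedFDeriv_one]
  exact (traceCLM E).le_opNorm _

lemma hasFDerivAt_laplacian (hv : ContDiff ℝ 3 v) (x : E) :
    HasFDerivAt (Δ v) ((traceCLM E).comp (fderiv ℝ (fderiv ℝ (∇ v)) x)) x := by
  have hD : Differentiable ℝ (fderiv ℝ (∇ v)) :=
    ((contDiff_gradient (m := 2) hv (by norm_num)).fderiv_right (m := 1)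
      (by norm_num)).differentiable one_ne_zero
  rw [← funext (divergence_gradient v)]
  exact (traceCLM E).hasFDerivAt.comp x (hD x).hasFDerivAt

lemma norm_fderiv_laplacian_le (hv : ContDiff ℝ 3 v) (x : E) :
    ‖fderiv ℝ (Δ v) x‖ ≤ ‖traceCLM E‖ * ‖iteratedFDeriv ℝ 3 v x‖ := by
  rw [(hasFDerivAt_laplacian hv x).fderiv, ← norm_iteratedFDeriv_gradient,
    ← norm_iteratedFDeriv_fderiv, norm_iteratedFDeriv_one]
  exact (traceCLM E).opNorm_comp_le _

end Laplacian

section EnergyDensity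

variable {E : Type*} [NormedAddCommGroup E] [InnerProductSpace ℝ E] [CompleteSpace E]

/-- The Allen–Cahn (Ginzburg–Landau) energy density of `v` for the potential `F`, i.e. the density
of the measure `μ` of the monotonicity formula. -/
noncomputable def energyDensity (ε : ℝ) (F : ℝ → ℝ) (v : E → ℝ) (x : E) : ℝ :=
  ε / 2 * ‖∇ v x‖ ^ 2 + 1 / ε * F (v x)

/-- The density of the discrepancy measure `ξ`. -/
noncomputable def discrepancyDensity (ε : ℝ) (F : ℝ → ℝ) (v : E → ℝ) (x : E) : ℝ :=
  ε / 2 * ‖∇ v x‖ ^ 2 - 1 / ε * F (v x)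

/-- The first variation of the energy density at `v` in the direction `h`. -/
noncomputable def energyDensityVariation (ε : ℝ) (F : ℝ → ℝ) (v h : E → ℝ) (x : E) : ℝ :=
  ε * ⟪∇ h x, ∇ v x⟫_ℝ + 1 / ε * (deriv F (v x) * h x)

/-- The time derivative of `ρ` times the energy density of a function `v` moving with velocity `h`,
divided by `ρ`, for a weight `ρ` such as the backward heat kernel of dimension `d` at time
`s - 1 / (2 * a)`: there `∂ₜρ = (d * a - ‖a • (x - y)‖ ^ 2) * ρ`. -/
noncomputable def weightedEnergyVariation (ε : ℝ) (F : ℝ → ℝ) (d a : ℝ) (y : E) (v h : E → ℝ)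
    (x : E) : ℝ :=
  (d * a - ‖a • (x - y)‖ ^ 2) * energyDensity ε F v x + energyDensityVariation ε F v h x

/-- The defect of self-similarity of a function `v` moving with velocity `h`: it vanishes when
the evolution shrinks homothetically towards `y`, at the rate `a`. -/
noncomputable def selfSimilarDefect (a : ℝ) (y : E) (v h : E → ℝ) (x : E) : ℝ :=
  h x - ⟪∇ v x, a • (x - y)⟫_ℝ

/-- The flux of the energy of a function `v` moving with velocity `h`, relative to the Gaussian
weight whose logarithm has gradient `-a • (x - y)`. -/
noncomputable def energyFlux (ε : ℝ) (F : ℝ → ℝ) (a : ℝ) (y : E) (v h : E → ℝ) (x : E) : E :=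
  (ε * selfSimilarDefect a y v h x) • ∇ v x + energyDensity ε F v x • a • (x - y)

variable {ε : ℝ} {F : ℝ → ℝ} {v h : E → ℝ} {x : E}

lemma energyDensity_nonneg (hε : 0 ≤ ε) (hdisc : discrepancyDensity ε F v x ≤ 0) :
    0 ≤ energyDensity ε F v x := by
  have hgrad : 0 ≤ ε / 2 * ‖∇ v x‖ ^ 2 := by positivity
  have hF : ε / 2 * ‖∇ v x‖ ^ 2 ≤ 1 / ε * F (v x) := sub_nonpos.1 hdisc
  exact add_nonneg hgrad (hgrad.trans hF)

lemma continuous_energyDensity (hF : Continuous F) (hv : ContDiff ℝ 1 v) :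
    Continuous (energyDensity ε F v) := by
  have hgrad : Continuous (∇ v) := (contDiff_gradient (m := 0) hv (by norm_num)).continuous
  exact ((hgrad.norm.pow 2).const_mul _).add ((hF.comp hv.continuous).const_mul _)

lemma continuous_weightedEnergyVariation (d a : ℝ) (y : E) (hF : ContDiff ℝ 1 F)
    (hv : ContDiff ℝ 1 v) (hh : ContDiff ℝ 1 h) :
    Continuous (weightedEnergyVariation ε F d a y v h) := by
  have hv' : Continuous (∇ v) := (contDiff_gradient (m := 0) hv (by norm_num)).continuous
  have hh' : Continuous (∇ h) := (contDiff_gradient (m := 0) hh (by norm_num)).continuous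
  have he : Continuous (energyDensity ε F v) := continuous_energyDensity hF.continuous hv
  unfold weightedEnergyVariation energyDensityVariation
  fun_prop

lemma norm_weightedEnergyVariation_le {a A C M : ℝ} (d : ℝ) (y : E) (ha : 0 ≤ a) (haA : a ≤ A)
    (he : ‖energyDensity ε F v x‖ ≤ C) (hvar : ‖energyDensityVariation ε F v h x‖ ≤ M) :
    ‖weightedEnergyVariation ε F d a y v h x‖ ≤ (‖d‖ * A + ‖A • (x - y)‖ ^ 2) * C + M := by
  have hA : 0 ≤ A := ha.trans haA
  have hd : ‖d * a‖ ≤ ‖d‖ * A := by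
    rw [norm_mul, norm_of_nonneg ha]
    gcongr
  have hsq : ‖‖a • (x - y)‖ ^ 2‖ ≤ ‖A • (x - y)‖ ^ 2 := by
    rw [norm_pow, norm_norm, norm_smul, norm_smul, norm_of_nonneg ha, norm_of_nonneg hA]
    gcongr
  refine (norm_add_le _ _).trans (add_le_add ?_ hvar)
  rw [norm_mul]
  exact mul_le_mul ((norm_sub_le _ _).trans (add_le_add hd hsq)) he (norm_nonneg _)
    (by positivity)

lemma hasFDerivAt_energyDensity (hF : Differentiable ℝ F) (hv : ContDiff ℝ 2 v) (x : E) :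
    HasFDerivAt (energyDensity ε F v)
      (ε • (innerSL ℝ (∇ v x)).comp (fderiv ℝ (∇ v) x) +
        (1 / ε * deriv F (v x)) • innerSL ℝ (∇ v x)) x := by
  have hgrad : HasFDerivAt (∇ v) (fderiv ℝ (∇ v) x) x :=
    (differentiable_gradient hv x).hasFDerivAt
  have hFv := (hF (v x)).hasDerivAt.comp_hasFDerivAt x
    (hv.differentiable two_ne_zero x).hasFDerivAt
  refine ((hgrad.norm_sq.const_mul (ε / 2)).add (hFv.const_mul (1 / ε))).congr_fderiv ?_
  ext ξ
  simp only [add_apply, smul_apply, ContinuousLinearMap.comp_apply, coe_innerSL_apply,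
    inner_gradient_left, nsmul_eq_mul, Nat.cast_ofNat, smul_eq_mul]
  ring

lemma hasFDerivAt_selfSimilarDefect (a : ℝ) (y : E) (hv : ContDiff ℝ 2 v)
    (hh : DifferentiableAt ℝ h x) :
    HasFDerivAt (selfSimilarDefect a y v h)
      (fderiv ℝ h x - ((innerSL ℝ (a • (x - y))).comp (fderiv ℝ (∇ v) x) +
        a • innerSL ℝ (∇ v x))) x := by
  have hgrad : HasFDerivAt (∇ v) (fderiv ℝ (∇ v) x) x :=
    (differentiable_gradient hv x).hasFDerivAt
  have hz : HasFDerivAt (fun x => a • (x - y)) (a • ContinuousLinearMap.id ℝ E) x :=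
    ((hasFDerivAt_id x).sub_const y).const_smul a
  refine (hh.hasFDerivAt.sub (hgrad.inner ℝ hz)).congr_fderiv ?_
  ext ξ
  simp only [sub_apply, add_apply, smul_apply, ContinuousLinearMap.comp_apply,
    ContinuousLinearMap.prod_apply, ContinuousLinearMap.id_apply, fderivInnerCLM_apply,
    coe_innerSL_apply, map_sub, map_smul, inner_smul_right, inner_sub_left, inner_gradient_left,
    real_inner_comm, smul_eq_mul, ContinuousLinearMap.smul_comp, ContinuousLinearMap.sub_comp]
  ring

end EnergyDensity

section EnergyBalance

variable {E : Type*} [NormedAddCommGroup E] [InnerProductSpace ℝ E] [FiniteDimensional ℝ E]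
  {ε : ℝ} {F : ℝ → ℝ} {v h : E → ℝ} {x : E}

lemma divergence_energyFlux (a : ℝ) (y : E) (hF : Differentiable ℝ F) (hv : ContDiff ℝ 2 v)
    (hh : DifferentiableAt ℝ h x) :
    divergence (energyFlux ε F a y v h) x =
      ε * selfSimilarDefect a y v h x * (Δ v) x
        + ε * (⟪∇ h x, ∇ v x⟫_ℝ - a * ‖∇ v x‖ ^ 2)
        + energyDensity ε F v x * (a * Module.finrank ℝ E)
        + 1 / ε * deriv F (v x) * ⟪∇ v x, a • (x - y)⟫_ℝ := by
  have hgrad : DifferentiableAt ℝ (∇ v) x := differentiable_gradient hv x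
  have hz : DifferentiableAt ℝ (fun x => a • (x - y)) x := by fun_prop
  have he := hasFDerivAt_energyDensity (ε := ε) hF hv x
  have hg := (hasFDerivAt_selfSimilarDefect a y hv hh).const_mul ε
  have hsymm := inner_fderiv_gradient_comm (x := x) hv.contDiffAt (∇ v x) (a • (x - y))
  unfold energyFlux
  rw [divergence_add (hg.differentiableAt.fun_smul hgrad) (he.differentiableAt.fun_smul hz),
    divergence_smul hg.differentiableAt hgrad, divergence_smul he.differentiableAt hz,
    divergence_gradient, divergence_const_smul_sub, hg.fderiv, he.fderiv]
  simp only [add_apply, sub_apply, smul_apply, ContinuousLinearMap.comp_apply,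
    innerSL_apply_apply, smul_eq_mul, real_inner_self_eq_norm_sq, ← inner_gradient_left]
  rw [real_inner_comm _ (a • (x - y)), hsymm]
  ring

theorem energy_balance (a : ℝ) (y : E) (hε : ε ≠ 0) (hF : Differentiable ℝ F)
    (hv : ContDiff ℝ 2 v) (hh : DifferentiableAt ℝ h x)
    (heq : h x = (Δ v) x - 1 / ε ^ 2 * deriv F (v x)) :
    weightedEnergyVariation ε F (Module.finrank ℝ E - 1) a y v h x =
      a * discrepancyDensity ε F v x - ε * selfSimilarDefect a y v h x ^ 2
        + (divergence (energyFlux ε F a y v h) x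
          - ⟪a • (x - y), energyFlux ε F a y v h x⟫_ℝ) := by
  have hF' : 1 / ε * deriv F (v x) = ε * ((Δ v) x - h x) := by
    rw [heq]
    field_simp
    ring
  have hinner : ⟪a • (x - y), energyFlux ε F a y v h x⟫_ℝ =
      ε * selfSimilarDefect a y v h x * ⟪∇ v x, a • (x - y)⟫_ℝ
        + energyDensity ε F v x * ‖a • (x - y)‖ ^ 2 := by
    rw [energyFlux, inner_add_right, real_inner_smul_right, real_inner_smul_right,
      real_inner_self_eq_norm_sq, real_inner_comm]
  rw [divergence_energyFlux a y hF hv hh, hinner, weightedEnergyVariation,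
    energyDensityVariation, ← mul_assoc, hF', selfSimilarDefect, energyDensity, discrepancyDensity]
  ring

end EnergyBalance

section Growth

variable {E : Type*} [NormedAddCommGroup E] [InnerProductSpace ℝ E] [CompleteSpace E]
  {ε C : ℝ} {F : ℝ → ℝ} {v h : E → ℝ}

lemma C1PolyGrowth.energyDensity (hF : ContDiff ℝ 1 F) (hv : C1PolyGrowth v)
    (hC : ∀ x, ‖v x‖ ≤ C) (hgrad : C1PolyGrowth (∇ v)) : C1PolyGrowth (energyDensity ε F v) := by
  have h : C1PolyGrowth fun x => (ε / 2) • ⟪∇ v x, ∇ v x⟫_ℝ + (1 / ε) • F (v x) :=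
    ((hgrad.inner hgrad).const_smul _).add ((hv.comp_of_bounded hF hC).const_smul _)
  unfold _root_.energyDensity
  simpa only [real_inner_self_eq_norm_sq, smul_eq_mul] using h

lemma C1PolyGrowth.energyFlux (a : ℝ) (y : E) (hF : ContDiff ℝ 1 F) (hv : C1PolyGrowth v)
    (hC : ∀ x, ‖v x‖ ≤ C) (hgrad : C1PolyGrowth (∇ v)) (hh : C1PolyGrowth h) :
    C1PolyGrowth (energyFlux ε F a y v h) := by
  have hz : C1PolyGrowth fun x => a • (x - y) := (C1PolyGrowth.id.sub (.const y)).const_smul a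
  have hdefect : C1PolyGrowth (selfSimilarDefect a y v h) := hh.sub (hgrad.inner hz)
  exact ((hdefect.const_smul ε).smul hgrad).add ((hv.energyDensity hF hC hgrad).smul hz)

end Growth

section SpaceTime

variable {E : Type*} [NormedAddCommGroup E]

/-- The time derivative at time `t` of a function of space and time, as a function of space. -/
noncomputable def timeDeriv (u : E → ℝ → ℝ) (t : ℝ) (x : E) : ℝ :=
  deriv (u x) t

section NormedSpace

variable [NormedSpace ℝ E] {u : E → ℝ → ℝ} {n : WithTop ℕ∞}

lemma contDiff_slice (hu : ContDiff ℝ n fun p : E × ℝ => u p.1 p.2) (t : ℝ) :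
    ContDiff ℝ n fun x => u x t :=
  hu.comp (contDiff_prodMk_left t)

lemma hasDerivAt_slice (hu : ContDiff ℝ 1 fun p : E × ℝ => u p.1 p.2) (x : E) (t : ℝ) :
    HasDerivAt (u x) (timeDeriv u t x) t :=
  ((hu.comp (contDiff_prodMk_right x)).differentiable one_ne_zero t).hasDerivAt

lemma timeDeriv_eq_fderiv (hu : ContDiff ℝ 1 fun p : E × ℝ => u p.1 p.2) (x : E) (t : ℝ) :
    timeDeriv u t x = fderiv ℝ (fun p : E × ℝ => u p.1 p.2) (x, t) (0, 1) :=
  ((hu.differentiable one_ne_zero (x, t)).hasFDerivAt.comp_hasDerivAt t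
    ((hasDerivAt_const t x).prodMk (hasDerivAt_id t))).deriv

lemma fderiv_slice (hu : ContDiff ℝ 1 fun p : E × ℝ => u p.1 p.2) (x : E) (t : ℝ) :
    fderiv ℝ (fun x => u x t) x =
      (fderiv ℝ (fun p : E × ℝ => u p.1 p.2) (x, t)).comp (.inl ℝ E ℝ) :=
  ((hu.differentiable one_ne_zero (x, t)).hasFDerivAt.comp (f := fun x => (x, t)) x
    (hasFDerivAt_prodMk_left x t)).fderiv

lemma contDiff_timeDeriv {m : WithTop ℕ∞} (hu : ContDiff ℝ n fun p : E × ℝ => u p.1 p.2)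
    (hmn : m + 1 ≤ n) (t : ℝ) : ContDiff ℝ m (timeDeriv u t) := by
  rw [funext fun x => timeDeriv_eq_fderiv (hu.of_le (le_trans le_add_self hmn)) x t]
  exact ((hu.fderiv_right hmn).comp (contDiff_prodMk_left t)).clm_apply contDiff_const

lemma hasDerivAt_fderiv_slice (hu : ContDiff ℝ 2 fun p : E × ℝ => u p.1 p.2) (x : E) (t : ℝ) :
    HasDerivAt (fun t => fderiv ℝ (fun x => u x t) x) (fderiv ℝ (timeDeriv u t) x) t := by
  have hu1 : ContDiff ℝ 1 fun p : E × ℝ => u p.1 p.2 := hu.of_le one_le_two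
  have hD : HasFDerivAt (fderiv ℝ fun p : E × ℝ => u p.1 p.2) _ (x, t) :=
    ((hu.fderiv_right (m := 1) (by norm_num)).differentiable one_ne_zero (x, t)).hasFDerivAt
  have htime := (hD.comp_hasDerivAt t ((hasDerivAt_const t x).prodMk (hasDerivAt_id t))).clm_comp
    (hasDerivAt_const t (ContinuousLinearMap.inl ℝ E ℝ))
  have hspace := (hD.comp (f := fun x => (x, t)) x (hasFDerivAt_prodMk_left x t)).clm_apply
    (hasFDerivAt_const ((0, 1) : E × ℝ) x)
  rw [funext fun t => fderiv_slice hu1 x t, funext fun x => timeDeriv_eq_fderiv hu1 x t]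
  refine htime.congr_deriv (Eq.trans ?_ hspace.fderiv.symm)
  ext ξ
  simpa using hu.contDiffAt.isSymmSndFDerivAt (by simp) (0, 1) (ξ, 0)

end NormedSpace

variable [InnerProductSpace ℝ E] [CompleteSpace E] {ε : ℝ} {F : ℝ → ℝ} {u : E → ℝ → ℝ}

lemma hasDerivAt_gradient_slice (hu : ContDiff ℝ 2 fun p : E × ℝ => u p.1 p.2) (x : E) (t : ℝ) :
    HasDerivAt (fun t => ∇ (fun x => u x t) x) (∇ (timeDeriv u t) x) t :=
  (InnerProductSpace.toDual ℝ E).symm.toContinuousLinearEquiv.toContinuousLinearMap.hasFDerivAt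
    |>.comp_hasDerivAt t (hasDerivAt_fderiv_slice hu x t)

lemma hasDerivAt_energyDensity (hF : Differentiable ℝ F)
    (hu : ContDiff ℝ 2 fun p : E × ℝ => u p.1 p.2) (x : E) (t : ℝ) :
    HasDerivAt (fun t => energyDensity ε F (fun x => u x t) x)
      (energyDensityVariation ε F (fun x => u x t) (timeDeriv u t) x) t := by
  have hut := hasDerivAt_slice (hu.of_le one_le_two) x t
  refine (((hasDerivAt_gradient_slice hu x t).norm_sq.const_mul (ε / 2)).add
    (((hF (u x t)).hasDerivAt.comp t hut).const_mul (1 / ε))).congr_deriv ?_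
  rw [energyDensityVariation, real_inner_comm]
  ring

end SpaceTime

section BoundedSolution

variable {E : Type*} [NormedAddCommGroup E] [InnerProductSpace ℝ E] [FiniteDimensional ℝ E]

/-- `u` is of class `C³`, solves the Allen–Cahn equation `∂ₜu = Δu - ε⁻² F'(u)` at the times in
`S`, and is uniformly bounded at these times together with its spatial derivatives up to third
order. -/
structure IsBoundedAllenCahnSolution (ε : ℝ) (F : ℝ → ℝ) (u : E → ℝ → ℝ) (S : Set ℝ) : Prop where
  contDiff : ContDiff ℝ 3 fun p : E × ℝ => u p.1 p.2
  timeDeriv_eq : ∀ t ∈ S, ∀ x,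
    timeDeriv u t x = (Δ fun x => u x t) x - 1 / ε ^ 2 * deriv F (u x t)
  bounded : ∃ C, ∀ t ∈ S, ∀ x, ∀ i ≤ 3, ‖iteratedFDeriv ℝ i (fun x => u x t) x‖ ≤ C

namespace IsBoundedAllenCahnSolution

variable {ε : ℝ} {F : ℝ → ℝ} {u : E → ℝ → ℝ} {S : Set ℝ} {t : ℝ}

lemma exists_norm_comp_le (hu : IsBoundedAllenCahnSolution ε F u S) {φ : ℝ → ℝ}
    (hφ : Continuous φ) : ∃ M, ∀ t ∈ S, ∀ x, ‖φ (u x t)‖ ≤ M := by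
  obtain ⟨C, hC⟩ := hu.bounded
  obtain ⟨M, hM⟩ := (isCompact_closedBall (0 : ℝ) C).exists_bound_of_continuousOn hφ.continuousOn
  refine ⟨M, fun t ht x => hM (u x t) ?_⟩
  simpa using hC t ht x 0 (by norm_num)

lemma exists_norm_gradient_le (hu : IsBoundedAllenCahnSolution ε F u S) :
    ∃ C, ∀ t ∈ S, ∀ x, ‖∇ (fun x => u x t) x‖ ≤ C := by
  obtain ⟨C, hC⟩ := hu.bounded
  refine ⟨C, fun t ht x => ?_⟩
  rw [← norm_iteratedFDeriv_zero (𝕜 := ℝ) (f := ∇ fun x => u x t), norm_iteratedFDeriv_gradient]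
  exact hC t ht x 1 (by norm_num)

lemma exists_norm_timeDeriv_le (hu : IsBoundedAllenCahnSolution ε F u S) (hF : ContDiff ℝ 1 F) :
    ∃ C, ∀ t ∈ S, ∀ x, ‖timeDeriv u t x‖ ≤ C := by
  obtain ⟨C, hC⟩ := hu.bounded
  obtain ⟨M, hM⟩ := hu.exists_norm_comp_le (hF.continuous_deriv le_rfl)
  refine ⟨‖traceCLM E‖ * C + ‖1 / ε ^ 2‖ * M, fun t ht x => ?_⟩
  rw [hu.timeDeriv_eq t ht]
  refine (norm_sub_le _ _).trans (add_le_add ((norm_laplacian_le _ x).trans ?_) ?_)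
  · gcongr
    exact hC t ht x 2 (by norm_num)
  · rw [norm_mul]
    gcongr
    exact hM t ht x

lemma exists_norm_fderiv_timeDeriv_le (hu : IsBoundedAllenCahnSolution ε F u S)
    (hF : ContDiff ℝ 2 F) : ∃ C, ∀ t ∈ S, ∀ x, ‖fderiv ℝ (timeDeriv u t) x‖ ≤ C := by
  have hF' : ContDiff ℝ 1 (deriv F) := hF.deriv'
  obtain ⟨C, hC⟩ := hu.bounded
  obtain ⟨M, hM⟩ := hu.exists_norm_comp_le (hF'.continuous_deriv le_rfl)
  refine ⟨‖traceCLM E‖ * C + ‖1 / ε ^ 2‖ * (M * C), fun t ht x => ?_⟩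
  have hv : ContDiff ℝ 3 fun x => u x t := contDiff_slice hu.contDiff t
  have hF'v : HasFDerivAt (fun x => 1 / ε ^ 2 * deriv F (u x t))
      ((1 / ε ^ 2) • deriv (deriv F) (u x t) • fderiv ℝ (fun x => u x t) x) x :=
    ((hF'.differentiable one_ne_zero (u x t)).hasDerivAt.comp_hasFDerivAt x
      (hv.differentiable three_ne_zero x).hasFDerivAt).const_mul (1 / ε ^ 2)
  have hΔ := (hasFDerivAt_laplacian hv x).differentiableAt.hasFDerivAt
  rw [funext (hu.timeDeriv_eq t ht), (hΔ.fun_sub hF'v).fderiv]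
  refine (norm_sub_le _ _).trans (add_le_add ((norm_fderiv_laplacian_le hv x).trans ?_) ?_)
  · gcongr
    exact hC t ht x 3 le_rfl
  · rw [norm_smul, norm_smul, ← norm_iteratedFDeriv_one]
    gcongr
    · exact (norm_nonneg _).trans (hM t ht x)
    · exact hM t ht x
    · exact hC t ht x 1 (by norm_num)

lemma exists_norm_energyDensity_le (hu : IsBoundedAllenCahnSolution ε F u S)
    (hF : Continuous F) :
    ∃ C, ∀ t ∈ S, ∀ x, ‖energyDensity ε F (fun x => u x t) x‖ ≤ C := by
  obtain ⟨C, hC⟩ := hu.exists_norm_gradient_le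
  obtain ⟨M, hM⟩ := hu.exists_norm_comp_le hF
  refine ⟨‖ε / 2‖ * C ^ 2 + ‖1 / ε‖ * M, fun t ht x => (norm_add_le _ _).trans ?_⟩
  rw [norm_mul, norm_mul, norm_pow, norm_norm]
  gcongr
  · exact hC t ht x
  · exact hM t ht x

lemma exists_norm_energyDensityVariation_le (hu : IsBoundedAllenCahnSolution ε F u S)
    (hF : ContDiff ℝ 2 F) :
    ∃ C, ∀ t ∈ S, ∀ x,
      ‖energyDensityVariation ε F (fun x => u x t) (timeDeriv u t) x‖ ≤ C := by
  have hF1 : ContDiff ℝ 1 F := hF.of_le one_le_two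
  obtain ⟨A, hA⟩ := hu.exists_norm_gradient_le
  obtain ⟨B, hB⟩ := hu.exists_norm_fderiv_timeDeriv_le hF
  obtain ⟨K, hK⟩ := hu.exists_norm_timeDeriv_le hF1
  obtain ⟨M, hM⟩ := hu.exists_norm_comp_le (hF1.continuous_deriv le_rfl)
  refine ⟨‖ε‖ * (B * A) + ‖1 / ε‖ * (M * K), fun t ht x => (norm_add_le _ _).trans ?_⟩
  rw [norm_mul, norm_mul, norm_mul, inner_gradient_left]
  have hinner := (fderiv ℝ (timeDeriv u t) x).le_of_opNorm_le_of_le (hB t ht x) (hA t ht x)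
  gcongr
  · exact (norm_nonneg _).trans (hM t ht x)
  · exact hM t ht x
  · exact hK t ht x

lemma c1PolyGrowth_slice (hu : IsBoundedAllenCahnSolution ε F u S) (ht : t ∈ S) :
    C1PolyGrowth fun x => u x t := by
  obtain ⟨C, hC⟩ := hu.bounded
  refine .of_bounded (C := C) (C' := C) (contDiff_slice (hu.contDiff.of_le (by norm_num)) t)
    (fun x => ?_) fun x => ?_
  · simpa using hC t ht x 0 (by norm_num)
  · simpa using hC t ht x 1 (by norm_num)

lemma c1PolyGrowth_gradient (hu : IsBoundedAllenCahnSolution ε F u S) (ht : t ∈ S) :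
    C1PolyGrowth (∇ fun x => u x t) := by
  obtain ⟨C, hC⟩ := hu.bounded
  obtain ⟨K, hK⟩ := hu.exists_norm_gradient_le
  refine .of_bounded (contDiff_gradient (contDiff_slice hu.contDiff t) (by norm_num)) (hK t ht)
    (C' := C) fun x => ?_
  rw [← norm_iteratedFDeriv_one, norm_iteratedFDeriv_gradient]
  exact hC t ht x 2 (by norm_num)

lemma c1PolyGrowth_timeDeriv (hu : IsBoundedAllenCahnSolution ε F u S) (hF : ContDiff ℝ 2 F)
    (ht : t ∈ S) : C1PolyGrowth (timeDeriv u t) := by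
  obtain ⟨C, hC⟩ := hu.exists_norm_timeDeriv_le (hF.of_le one_le_two)
  obtain ⟨K, hK⟩ := hu.exists_norm_fderiv_timeDeriv_le hF
  exact .of_bounded (contDiff_timeDeriv hu.contDiff (by norm_num) t) (hC t ht) (hK t ht)

lemma c1PolyGrowth_energyFlux (hu : IsBoundedAllenCahnSolution ε F u S) (hF : ContDiff ℝ 2 F)
    (ht : t ∈ S) (a : ℝ) (y : E) :
    C1PolyGrowth (energyFlux ε F a y (fun x => u x t) (timeDeriv u t)) := by
  obtain ⟨C, hC⟩ := hu.exists_norm_comp_le continuous_id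
  exact (hu.c1PolyGrowth_slice ht).energyFlux a y (hF.of_le one_le_two) (hC t ht)
    (hu.c1PolyGrowth_gradient ht) (hu.c1PolyGrowth_timeDeriv hF ht)

end IsBoundedAllenCahnSolution

end BoundedSolution

section Monotonicity

variable {E : Type*} [NormedAddCommGroup E] [InnerProductSpace ℝ E] [FiniteDimensional ℝ E]
  {ε s t t₁ t₂ : ℝ} {F : ℝ → ℝ} {u : E → ℝ → ℝ}

lemma hasDerivAt_backwardHeatKernel_mul_energyDensity (d : ℝ) (y : E) (hF : Differentiable ℝ F)
    (hu : ContDiff ℝ 2 fun p : E × ℝ => u p.1 p.2) (hts : t < s) (x : E) :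
    HasDerivAt (fun t => backwardHeatKernel d y s x t * energyDensity ε F (fun x => u x t) x)
      (backwardHeatKernel d y s x t *
        weightedEnergyVariation ε F d (2 * (s - t))⁻¹ y (fun x => u x t) (timeDeriv u t) x) t := by
  refine ((hasDerivAt_backwardHeatKernel d y hts x).mul
    (hasDerivAt_energyDensity hF hu x t)).congr_deriv ?_
  rw [weightedEnergyVariation]
  ring

lemma continuous_backwardHeatKernel_mul_energyDensity (d : ℝ) (y : E) (hF : Continuous F)
    (hu : ContDiff ℝ 1 fun p : E × ℝ => u p.1 p.2) (s t : ℝ) :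
    Continuous fun x => backwardHeatKernel d y s x t * energyDensity ε F (fun x => u x t) x :=
  (continuous_backwardHeatKernel d y s t).mul (continuous_energyDensity hF (contDiff_slice hu t))

lemma continuous_backwardHeatKernel_mul_weightedEnergyVariation (d a : ℝ) (y : E)
    (hF : ContDiff ℝ 1 F) (hu : ContDiff ℝ 2 fun p : E × ℝ => u p.1 p.2) (s t : ℝ) :
    Continuous fun x => backwardHeatKernel d y s x t *
      weightedEnergyVariation ε F d a y (fun x => u x t) (timeDeriv u t) x :=
  (continuous_backwardHeatKernel d y s t).mul (continuous_weightedEnergyVariation d a y hF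
    (contDiff_slice (hu.of_le one_le_two) t) (contDiff_timeDeriv hu (by norm_num) t))

variable [MeasurableSpace E] [BorelSpace E]

/-- The energy of `u` at time `t`, weighted by the backward heat kernel of dimension `d` with pole
at `(y, s)`. -/
noncomputable def weightedEnergy (ε : ℝ) (F : ℝ → ℝ) (u : E → ℝ → ℝ) (d : ℝ) (y : E)
    (s t : ℝ) : ℝ :=
  ∫ x, backwardHeatKernel d y s x t * energyDensity ε F (fun x => u x t) x

namespace IsBoundedAllenCahnSolution

variable (hu : IsBoundedAllenCahnSolution ε F u (Set.Icc t₁ t₂)) (d : ℝ) (y : E)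

include hu

lemma exists_integrable_norm_mul_energyDensity_le (hF : Continuous F) (h₁₂ : t₁ ≤ t₂)
    (h₂s : t₂ < s) :
    ∃ G : E → ℝ, Integrable G ∧ ∀ t ∈ Set.Icc t₁ t₂, ∀ x,
      ‖backwardHeatKernel d y s x t * energyDensity ε F (fun x => u x t) x‖ ≤ G x := by
  obtain ⟨C, hC⟩ := hu.exists_norm_energyDensity_le hF
  obtain ⟨G, hG, hle⟩ := (HasPolyGrowth.of_bounded (f := fun _ : E => C) fun _ => le_rfl)
    |>.exists_integrable_norm_backwardHeatKernel_mul_le d y continuous_const h₁₂ h₂s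
  exact ⟨G, hG, fun t ht x => hle t ht x _ (hC t ht x)⟩

lemma exists_integrable_norm_mul_weightedEnergyVariation_le (hF : ContDiff ℝ 2 F)
    (h₁₂ : t₁ ≤ t₂) (h₂s : t₂ < s) :
    ∃ G : E → ℝ, Integrable G ∧ ∀ t ∈ Set.Icc t₁ t₂, ∀ x,
      ‖backwardHeatKernel d y s x t *
        weightedEnergyVariation ε F d (2 * (s - t))⁻¹ y (fun x => u x t) (timeDeriv u t) x‖
          ≤ G x := by
  obtain ⟨C, hC⟩ := hu.exists_norm_energyDensity_le hF.continuous
  obtain ⟨M, hM⟩ := hu.exists_norm_energyDensityVariation_le hF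
  set A := (2 * (s - t₂))⁻¹
  have hz : C1PolyGrowth fun x : E => A • (x - y) := (C1PolyGrowth.id.sub (.const y)).const_smul A
  have hgrowth : C1PolyGrowth fun x => C • (‖d‖ * A + ⟪A • (x - y), A • (x - y)⟫_ℝ) + M :=
    (((C1PolyGrowth.const (‖d‖ * A)).add (hz.inner hz)).const_smul C).add (.const M)
  obtain ⟨G, hG, hle⟩ := hgrowth.growth.exists_integrable_norm_backwardHeatKernel_mul_le d y
    hgrowth.contDiff.continuous h₁₂ h₂s
  refine ⟨G, hG, fun t ht x => hle t ht x _ ?_⟩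
  have hst : 0 < s - t := by linarith [ht.2]
  have hA : (2 * (s - t))⁻¹ ≤ A := by
    have : 0 < s - t₂ := sub_pos.2 h₂s
    exact inv_anti₀ (by positivity) (by linarith [ht.2])
  rw [real_inner_self_eq_norm_sq, smul_eq_mul, mul_comm C]
  exact norm_weightedEnergyVariation_le d y (by positivity) hA (hC t ht x) (hM t ht x)

lemma integrable_mul_energyDensity (hF : Continuous F) (ht : t ∈ Set.Icc t₁ t₂) (h₂s : t₂ < s) :
    Integrable fun x => backwardHeatKernel d y s x t * energyDensity ε F (fun x => u x t) x := by
  obtain ⟨G, hG, hle⟩ :=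
    hu.exists_integrable_norm_mul_energyDensity_le d y hF (ht.1.trans ht.2) h₂s
  exact hG.mono' (continuous_backwardHeatKernel_mul_energyDensity d y hF
    (hu.contDiff.of_le (by norm_num)) s t).aestronglyMeasurable
    (.of_forall (hle t ht))

lemma continuousOn_weightedEnergy (hF : ContDiff ℝ 1 F) (h₁₂ : t₁ ≤ t₂) (h₂s : t₂ < s) :
    ContinuousOn (weightedEnergy ε F u d y s) (Set.Icc t₁ t₂) := by
  obtain ⟨G, hG, hle⟩ :=
    hu.exists_integrable_norm_mul_energyDensity_le d y hF.continuous h₁₂ h₂s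
  exact continuousOn_of_dominated
    (fun t _ => (continuous_backwardHeatKernel_mul_energyDensity d y hF.continuous
      (hu.contDiff.of_le (by norm_num)) s t).aestronglyMeasurable)
    (fun t ht => .of_forall (hle t ht)) hG
    (.of_forall fun x t ht => (hasDerivAt_backwardHeatKernel_mul_energyDensity d y
      (hF.differentiable one_ne_zero) (hu.contDiff.of_le (by norm_num))
      (ht.2.trans_lt h₂s) x).continuousAt.continuousWithinAt)

lemma integrable_and_hasDerivAt_weightedEnergy (hF : ContDiff ℝ 2 F) (h₂s : t₂ < s)
    (ht : t ∈ Set.Ioo t₁ t₂) :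
    (Integrable fun x => backwardHeatKernel d y s x t *
      weightedEnergyVariation ε F d (2 * (s - t))⁻¹ y (fun x => u x t) (timeDeriv u t) x) ∧
    HasDerivAt (weightedEnergy ε F u d y s)
      (∫ x, backwardHeatKernel d y s x t *
        weightedEnergyVariation ε F d (2 * (s - t))⁻¹ y (fun x => u x t) (timeDeriv u t) x) t := by
  have hF1 : ContDiff ℝ 1 F := hF.of_le one_le_two
  have hu2 : ContDiff ℝ 2 fun p : E × ℝ => u p.1 p.2 := hu.contDiff.of_le (by norm_num)
  have ht' : t ∈ Set.Icc t₁ t₂ := Set.Ioo_subset_Icc_self ht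
  obtain ⟨G, hG, hle⟩ := hu.exists_integrable_norm_mul_weightedEnergyVariation_le d y hF
    (ht'.1.trans ht'.2) h₂s
  exact hasDerivAt_integral_of_dominated_loc_of_deriv_le (Ioo_mem_nhds ht.1 ht.2)
    (.of_forall fun t => (continuous_backwardHeatKernel_mul_energyDensity d y hF.continuous
      (hu2.of_le one_le_two) s t).aestronglyMeasurable)
    (hu.integrable_mul_energyDensity d y hF.continuous ht' h₂s)
    (continuous_backwardHeatKernel_mul_weightedEnergyVariation d _ y hF1 hu2 s
      t).aestronglyMeasurable
    (.of_forall fun x t ht => hle t (Set.Ioo_subset_Icc_self ht) x) hG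
    (.of_forall fun x t ht => hasDerivAt_backwardHeatKernel_mul_energyDensity d y
      (hF1.differentiable one_ne_zero) hu2 (ht.2.trans h₂s) x)

theorem hasDerivAt_weightedEnergy (hε : ε ≠ 0) (hF : ContDiff ℝ 2 F) (h₂s : t₂ < s)
    (ht : t ∈ Set.Ioo t₁ t₂) :
    HasDerivAt (weightedEnergy ε F u (Module.finrank ℝ E - 1) y s)
      (∫ x, backwardHeatKernel (Module.finrank ℝ E - 1) y s x t *
        ((2 * (s - t))⁻¹ * discrepancyDensity ε F (fun x => u x t) x -
          ε * selfSimilarDefect (2 * (s - t))⁻¹ y (fun x => u x t) (timeDeriv u t) x ^ 2)) t := by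
  set d : ℝ := Module.finrank ℝ E - 1
  set a : ℝ := (2 * (s - t))⁻¹
  have ht' : t ∈ Set.Icc t₁ t₂ := Set.Ioo_subset_Icc_self ht
  have hts : t < s := ht.2.trans h₂s
  obtain ⟨hint, hderiv⟩ := hu.integrable_and_hasDerivAt_weightedEnergy d y hF h₂s ht
  have hV := hu.c1PolyGrowth_energyFlux hF ht' a y
  refine hderiv.congr_deriv ?_
  rw [← sub_zero (∫ _, _), ← hV.integral_backwardHeatKernel_mul_divergence_sub d y hts,
    ← integral_sub hint (hV.integrable_backwardHeatKernel_mul_divergence_sub d y hts)]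
  refine integral_congr_ae (.of_forall fun x => ?_)
  simp only [d]
  rw [energy_balance a y hε (hF.differentiable two_ne_zero)
    (contDiff_slice (hu.contDiff.of_le (by norm_num)) t)
    ((hu.c1PolyGrowth_timeDeriv hF ht').differentiable x) (hu.timeDeriv_eq t ht' x)]
  ring

theorem antitoneOn_weightedEnergy (hε : 0 < ε) (hF : ContDiff ℝ 2 F) (h₂s : t₂ < s)
    (hdisc : ∀ t ∈ Set.Icc t₁ t₂, ∀ x, discrepancyDensity ε F (fun x => u x t) x ≤ 0) :
    AntitoneOn (weightedEnergy ε F u (Module.finrank ℝ E - 1) y s) (Set.Icc t₁ t₂) := by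
  rcases lt_or_ge t₂ t₁ with h₂₁ | h₁₂
  · exact fun t ht => absurd (ht.1.trans ht.2) h₂₁.not_ge
  have hderiv {t} (ht : t ∈ interior (Set.Icc t₁ t₂)) :=
    hu.hasDerivAt_weightedEnergy y hε.ne' hF h₂s (interior_Icc (a := t₁) ▸ ht)
  refine antitoneOn_of_deriv_nonpos (convex_Icc t₁ t₂)
    (hu.continuousOn_weightedEnergy _ y (hF.of_le one_le_two) h₁₂ h₂s)
    (fun t ht => (hderiv ht).differentiableAt.differentiableWithinAt) fun t ht => ?_
  have ht' : t ∈ Set.Icc t₁ t₂ := interior_subset ht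
  have hts : 0 ≤ s - t := by linarith [ht'.2]
  rw [(hderiv ht).deriv]
  refine integral_nonpos fun x => mul_nonpos_of_nonneg_of_nonpos
    (backwardHeatKernel_nonneg _ y (sub_nonneg.1 hts) x) (sub_nonpos.2 ?_)
  exact (mul_nonpos_of_nonneg_of_nonpos (by positivity) (hdisc t ht' x)).trans (by positivity)

lemma lintegral_backwardHeatKernel_withDensity (hF : Continuous F) (ht : t ∈ Set.Icc t₁ t₂)
    (h₂s : t₂ < s) (he : ∀ x, 0 ≤ energyDensity ε F (fun x => u x t) x) :
    ∫⁻ x, ENNReal.ofReal (backwardHeatKernel d y s x t) ∂(volume.withDensity fun x =>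
        ENNReal.ofReal (energyDensity ε F (fun x => u x t) x)) =
      ENNReal.ofReal (weightedEnergy ε F u d y s t) := by
  have he_cont : Continuous (energyDensity ε F fun x => u x t) :=
    continuous_energyDensity hF (contDiff_slice (hu.contDiff.of_le (by norm_num)) t)
  have hρ x : 0 ≤ backwardHeatKernel d y s x t :=
    backwardHeatKernel_nonneg d y (ht.2.trans h₂s.le) x
  rw [lintegral_withDensity_eq_lintegral_mul _ he_cont.measurable.ennreal_ofReal
      (continuous_backwardHeatKernel d y s t).measurable.ennreal_ofReal,
    weightedEnergy, ofReal_integral_eq_lintegral_ofReal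
      (hu.integrable_mul_energyDensity d y hF ht h₂s)
      (.of_forall fun x => mul_nonneg (hρ x) (he x))]
  refine lintegral_congr fun x => ?_
  rw [Pi.mul_apply, mul_comm, ← ENNReal.ofReal_mul (hρ x)]

end IsBoundedAllenCahnSolution

theorem allen_cahn_monotonicity_general (hε : 0 < ε) (hF : ContDiff ℝ 2 F)
    (hu : IsBoundedAllenCahnSolution ε F u (Set.Icc t₁ t₂))
    (hdisc : ∀ t ∈ Set.Icc t₁ t₂, ∀ x, discrepancyDensity ε F (fun x => u x t) x ≤ 0)
    (y : E) (h₁₂ : t₁ ≤ t₂) (h₂s : t₂ < s) :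
    ∫⁻ x, ENNReal.ofReal (backwardHeatKernel (Module.finrank ℝ E - 1) y s x t₂)
        ∂(volume.withDensity fun x => ENNReal.ofReal (energyDensity ε F (fun x => u x t₂) x)) ≤
      ∫⁻ x, ENNReal.ofReal (backwardHeatKernel (Module.finrank ℝ E - 1) y s x t₁)
        ∂(volume.withDensity fun x => ENNReal.ofReal (energyDensity ε F (fun x => u x t₁) x)) := by
  have h₁ : t₁ ∈ Set.Icc t₁ t₂ := Set.left_mem_Icc.2 h₁₂
  have h₂ : t₂ ∈ Set.Icc t₁ t₂ := Set.right_mem_Icc.2 h₁₂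
  have he {t} (ht : t ∈ Set.Icc t₁ t₂) x : 0 ≤ energyDensity ε F (fun x => u x t) x :=
    energyDensity_nonneg hε.le (hdisc t ht x)
  rw [hu.lintegral_backwardHeatKernel_withDensity _ y hF.continuous h₂ h₂s (he h₂),
    hu.lintegral_backwardHeatKernel_withDensity _ y hF.continuous h₁ h₂s (he h₁)]
  exact ENNReal.ofReal_le_ofReal (hu.antitoneOn_weightedEnergy y hε hF h₂s hdisc h₁ h₂ h₁₂)

end Monotonicity

lemma contDiff_doubleWell : ContDiff ℝ 2 fun r : ℝ => 1 / 2 * (1 - r ^ 2) ^ 2 := by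
  fun_prop

lemma deriv_doubleWell (r : ℝ) :
    deriv (fun r : ℝ => 1 / 2 * (1 - r ^ 2) ^ 2) r = 2 * r * (r ^ 2 - 1) := by
  have h : HasDerivAt (fun r : ℝ => 1 / 2 * (1 - r ^ 2) ^ 2) _ r :=
    (((hasDerivAt_pow 2 r).const_sub 1).pow 2).const_mul (1 / 2)
  rw [h.deriv]
  push_cast
  ring

lemma spaceLaplacian_eq_laplacian {n : ℕ} {f : EuclideanSpace ℝ (Fin n) → ℝ}
    (hf : ContDiff ℝ 2 f) (x : EuclideanSpace ℝ (Fin n)) : spaceLaplacian n f x = (Δ f) x := by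
  have hf' : Differentiable ℝ (fderiv ℝ f) :=
    (hf.fderiv_right (m := 1) (by norm_num)).differentiable one_ne_zero
  rw [spaceLaplacian, InnerProductSpace.laplacian_eq_iteratedFDeriv_orthonormalBasis f
    (EuclideanSpace.basisFun (Fin n) ℝ)]
  refine Finset.sum_congr rfl fun i _ => ?_
  rw [fderiv_clm_apply (hf' x) (by fun_prop)]
  simp [iteratedFDeriv_two_apply]

/-- Huisken-type monotonicity for the Allen–Cahn equation on `ℝⁿ`: if the discrepancy is
nonpositive at every time, then for every `y` and `0 ≤ t₁ ≤ t₂ < s`,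
`∫ ρ_{y,s}(·,t₂) dμ^{t₂} ≤ ∫ ρ_{y,s}(·,t₁) dμ^{t₁}`, where
`ρ_{y,s}(x,t) = (4π(s-t))^{-(n-1)/2} exp(-|x-y|²/(4(s-t)))`. -/
theorem allen_cahn_monotonicity (n : ℕ) (hn : 1 ≤ n) (ε : ℝ) (hε : 0 < ε)
    (u : EuclideanSpace ℝ (Fin n) → ℝ → ℝ)
    (hsmooth : ContDiff ℝ (⊤ : ℕ∞) (fun p : EuclideanSpace ℝ (Fin n) × ℝ => u p.1 p.2))
    (hu1 : ∀ x t, |u x t| ≤ 1)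
    (hpde : ∀ x, ∀ t, 0 ≤ t →
      deriv (u x) t = spaceLaplacian n (fun y => u y t) x
        - (1 / ε ^ 2) * (2 * u x t * ((u x t) ^ 2 - 1)))
    (hbnd : ∀ T > (0 : ℝ), ∃ C : ℝ, ∀ x, ∀ t ∈ Set.Icc (0 : ℝ) T,
      (∀ i ≤ 3, ‖iteratedFDeriv ℝ i (fun y => u y t) x‖ ≤ C) ∧ |deriv (u x) t| ≤ C)
    (μ : ℝ → Measure (EuclideanSpace ℝ (Fin n)))
    (hμ : ∀ t, μ t = volume.withDensity (fun x =>
      ENNReal.ofReal ((ε / 2) * ‖gradient (fun y => u y t) x‖ ^ 2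
        + (1 / ε) * ((1 / 2) * (1 - (u x t) ^ 2) ^ 2))))
    (hdisc : ∀ x, ∀ t, 0 ≤ t →
      (ε / 2) * ‖gradient (fun y => u y t) x‖ ^ 2
        ≤ (1 / ε) * ((1 / 2) * (1 - (u x t) ^ 2) ^ 2)) :
    ∀ (y : EuclideanSpace ℝ (Fin n)) (t₁ t₂ s : ℝ), 0 ≤ t₁ → t₁ ≤ t₂ → t₂ < s →
      ∫⁻ x, ENNReal.ofReal ((4 * Real.pi * (s - t₂)) ^ (-(((n : ℝ) - 1) / 2)) *
          Real.exp (-(dist x y) ^ 2 / (4 * (s - t₂)))) ∂(μ t₂)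
        ≤ ∫⁻ x, ENNReal.ofReal ((4 * Real.pi * (s - t₁)) ^ (-(((n : ℝ) - 1) / 2)) *
            Real.exp (-(dist x y) ^ 2 / (4 * (s - t₁)))) ∂(μ t₁) := by
  intro y t₁ t₂ s h₁ h₁₂ h₂s
  obtain ⟨C, hC⟩ := hbnd (t₂ + 1) (by linarith)
  have hsmooth₃ := contDiff_infty.1 hsmooth 3
  have hu : IsBoundedAllenCahnSolution ε (fun r => 1 / 2 * (1 - r ^ 2) ^ 2) u (Set.Icc t₁ t₂) :=
    { contDiff := hsmooth₃
      timeDeriv_eq := fun t ht x => by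
        rw [deriv_doubleWell, ← spaceLaplacian_eq_laplacian
          (contDiff_slice (hsmooth₃.of_le (by norm_num)) t)]
        exact hpde x t (h₁.trans ht.1)
      bounded := ⟨C, fun t ht x => (hC x t ⟨h₁.trans ht.1, by linarith [ht.2]⟩).1⟩ }
  have hmono := allen_cahn_monotonicity_general hε contDiff_doubleWell hu
    (fun t ht x => sub_nonpos.2 (hdisc x t (h₁.trans ht.1))) y h₁₂ h₂s
  rw [finrank_euclideanSpace_fin] at hmono
  rw [hμ, hμ]
  exact hmono
end
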